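/- arXiv:1308.0980 — 2 statements merged into one kernel-verified Lean document; each statement's English description precedes it below -/
import Mathlib

section
/- Let Ω ⊆ ℝⁿ be an exterior domain (complement of a compact set), n ≥ 3, and let 1 < r < s < ∞. Then the set 𝒞₀(Ω) of smooth compactly supported divergence-free vector fields on Ω is dense in J^r(Ω) ∩ J^s(Ω) with respect to the norm ‖·‖_{L^r} + ‖·‖_{L^s}, where J^t(Ω) denotes the closure of 𝒞₀(Ω) in L^t(Ω). -/
open scoped BigOperators
open MeasureTheory

noncomputable def Dmat {n : ℕ} (u : (Fin n → ℝ) → Fin n → ℝ) (x : Fin n → ℝ) :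
    Matrix (Fin n) (Fin n) ℝ :=
  fun i j => fderiv ℝ u x (Pi.single j 1) i

noncomputable def divg {n : ℕ} (u : (Fin n → ℝ) → Fin n → ℝ) (x : Fin n → ℝ) : ℝ :=
  ∑ i, Dmat u x i i

/-- Smooth divergence-free vector field compactly supported in `Ω`. -/
def IsTestIn {n : ℕ} (Ω : Set (Fin n → ℝ)) (φ : (Fin n → ℝ) → Fin n → ℝ) : Prop :=
  ContDiff ℝ (⊤ : ℕ∞) φ ∧ HasCompactSupport φ ∧ tsupport φ ⊆ Ω ∧ ∀ x, divg φ x = 0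

/-- Euclidean `L^t(Ω)` norm of a vector field. -/
noncomputable def LtNorm {n : ℕ} (Ω : Set (Fin n → ℝ)) (t : ℝ)
    (f : (Fin n → ℝ) → Fin n → ℝ) : ℝ :=
  (∫ x in Ω, Real.sqrt (∑ i, (f x i) ^ 2) ^ t) ^ (1 / t)

/-!
A field that is close to `v` in `L^s` is also close to `v` in `L^r` on every bounded set, so only
the behaviour at infinity has to be repaired, by a cut-off that keeps the divergence zero. A
divergence-free field `φ` on `ℝⁿ` has the explicit potential `Pᵢ (x - a)ⱼ - Pⱼ (x - a)ᵢ`, where `P`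
is a weighted mean of `φ` along the segment from `a` to `x`. Multiplying this potential by a cut-off
function `χ` at radius `R`, and then differentiating, gives `χ φ` up to an error that lives on the
shell `R ≤ |x| ≤ 2R` and is at most a multiple of `|P|` there, uniformly in `R`. This explicit
construction takes the place of the Bogovskii operator.

Averaging over the centre `a` bounds the `L^p` norm of `P` by that of `φ` for `p = r` and `p = s`
simultaneously. The bound is small, and not merely finite, because for `R = M²` a segment reaching
the shell spends a fraction of order `1 / M` of its parameter in the ball of radius `M`, outside of
which `v` is small; here `p > 1` enters.
-/

open Set Metric
open scoped ENNReal Topology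

section ParametricIntegral

universe u

variable {E G : Type u} [NormedAddCommGroup E] [NormedSpace ℝ E] [NormedAddCommGroup G]
  [NormedSpace ℝ G] {F : E → ℝ → G} {m : WithTop ℕ∞}

lemma contDiff_uncurry_fderiv {l : WithTop ℕ∞} (hF : ContDiff ℝ m (Function.uncurry F))
    (hl : l + 1 ≤ m) :
    ContDiff ℝ l (Function.uncurry fun x t => fderiv ℝ (fun y => F y t) x) := by
  have hshuffle : ContDiff ℝ m fun q : (E × ℝ) × E => (q.2, q.1.2) := by fun_prop
  exact ContDiff.fderiv (f := fun p y => F y p.2) (hF.comp hshuffle) contDiff_fst hl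

variable [FiniteDimensional ℝ E]

lemma hasFDerivAt_intervalIntegral_of_contDiff (hF : ContDiff ℝ 1 (Function.uncurry F))
    (a b : ℝ) (x₀ : E) :
    HasFDerivAt (fun x => ∫ t in a..b, F x t) (∫ t in a..b, fderiv ℝ (fun x => F x t) x₀) x₀ := by
  have hF' : Continuous (Function.uncurry fun x t => fderiv ℝ (fun y => F y t) x) :=
    (contDiff_uncurry_fderiv (l := 0) hF (by norm_num)).continuous
  obtain ⟨C, hC⟩ := ((isCompact_closedBall x₀ 1).prod (isCompact_uIcc (a := a)
    (b := b))).exists_bound_of_continuousOn hF'.continuousOn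
  have hcont (x : E) : Continuous (F x) := hF.continuous.comp (Continuous.prodMk_right x)
  refine intervalIntegral.hasFDerivAt_integral_of_dominated_of_fderiv_le (𝕜 := ℝ)
    (F' := fun x t => fderiv ℝ (fun y => F y t) x) (bound := fun _ => C)
    (closedBall_mem_nhds x₀ one_pos) (.of_forall fun x => (hcont x).aestronglyMeasurable)
    ((hcont x₀).intervalIntegrable a b)
    (hF'.comp (Continuous.prodMk_right x₀)).aestronglyMeasurable
    (.of_forall fun t ht x hx => hC (x, t) ⟨hx, uIoc_subset_uIcc ht⟩)
    intervalIntegrable_const (.of_forall fun t _ x _ => ?_)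
  have hslice : ContDiff ℝ 1 fun x => F x t := hF.comp (contDiff_prodMk_left t)
  exact (hslice.differentiable one_ne_zero x).hasFDerivAt

lemma contDiff_nat_intervalIntegral (a b : ℝ) (k : ℕ) :
    ∀ {G : Type u} [NormedAddCommGroup G] [NormedSpace ℝ G] {F : E → ℝ → G},
      ContDiff ℝ (⊤ : ℕ∞) (Function.uncurry F) → ContDiff ℝ k fun x => ∫ t in a..b, F x t := by
  induction k with
  | zero =>
    intro G _ _ F hF
    have hF1 : ContDiff ℝ 1 (Function.uncurry F) := hF.of_le (by exact_mod_cast le_top)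
    exact contDiff_zero.2 <| continuous_iff_continuousAt.2 fun x =>
      (hasFDerivAt_intervalIntegral_of_contDiff hF1 a b x).continuousAt
  | succ k ih =>
    intro G _ _ F hF
    have hF1 : ContDiff ℝ 1 (Function.uncurry F) := hF.of_le (by exact_mod_cast le_top)
    exact contDiff_succ_iff_hasFDerivAt.2 ⟨_, ih (contDiff_uncurry_fderiv hF (by simp)),
      hasFDerivAt_intervalIntegral_of_contDiff hF1 a b⟩

lemma contDiff_intervalIntegral (hF : ContDiff ℝ (⊤ : ℕ∞) (Function.uncurry F)) (a b : ℝ) :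
    ContDiff ℝ (⊤ : ℕ∞) fun x => ∫ t in a..b, F x t :=
  contDiff_infty.2 fun k => contDiff_nat_intervalIntegral a b k hF

end ParametricIntegral

section RadialMean

variable {E F : Type*} [NormedAddCommGroup E] [NormedSpace ℝ E]
  [NormedAddCommGroup F] [NormedSpace ℝ F] {φ : E → F}

/-- The weighted mean `∫₀¹ tᵏ φ(a + t(x - a)) dt` of `φ` over the segment from `a` to `x`: the
building block of the Poincaré homotopy operator on `(k + 2)`-dimensional space. -/
noncomputable def radialMean (k : ℕ) (φ : E → F) (a x : E) : F :=
  ∫ t in (0 : ℝ)..1, t ^ k • φ (a + t • (x - a))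

lemma contDiff_radialMean_integrand (hφ : ContDiff ℝ (⊤ : ℕ∞) φ) (k : ℕ) (a : E) :
    ContDiff ℝ (⊤ : ℕ∞)
      (Function.uncurry fun (x : E) (t : ℝ) => t ^ k • φ (a + t • (x - a))) := by
  have hseg : ContDiff ℝ (⊤ : ℕ∞) fun p : E × ℝ => a + p.2 • (p.1 - a) := by fun_prop
  exact (contDiff_snd.pow k).smul (hφ.comp hseg)

lemma fderiv_comp_segment (hφ : Differentiable ℝ φ) (a x : E) (t : ℝ) :
    fderiv ℝ (fun y => φ (a + t • (y - a))) x = t • fderiv ℝ φ (a + t • (x - a)) := by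
  have hseg : HasFDerivAt (fun y : E => a + t • (y - a)) (t • ContinuousLinearMap.id ℝ E) x :=
    (((hasFDerivAt_id x).sub_const a).const_smul t).const_add a
  refine ((hφ _).hasFDerivAt.comp x hseg).fderiv.trans ?_
  rw [ContinuousLinearMap.comp_smul, ContinuousLinearMap.comp_id]

lemma hasDerivAt_comp_segment (hφ : Differentiable ℝ φ) (a x : E) (t : ℝ) :
    HasDerivAt (fun t : ℝ => φ (a + t • (x - a))) (fderiv ℝ φ (a + t • (x - a)) (x - a)) t := by
  have hseg : HasDerivAt (fun t : ℝ => a + t • (x - a)) (x - a) t := by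
    simpa using ((hasDerivAt_id t).smul_const (x - a)).const_add a
  exact (hφ _).hasFDerivAt.comp_hasDerivAt t hseg

lemma map_radialMean [CompleteSpace F] {G : Type*} [NormedAddCommGroup G] [NormedSpace ℝ G]
    [CompleteSpace G] (L : F →L[ℝ] G) (hφ : Continuous φ) (k : ℕ) (a x : E) :
    L (radialMean k φ a x) = radialMean k (fun y => L (φ y)) a x := by
  have hint : Continuous fun t : ℝ => t ^ k • φ (a + t • (x - a)) := by fun_prop
  refine (L.intervalIntegral_comp_comm (hint.intervalIntegrable 0 1)).symm.trans ?_
  simp only [map_smul, radialMean]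

universe u

variable {E F : Type u} [NormedAddCommGroup E] [NormedSpace ℝ E] [FiniteDimensional ℝ E]
  [NormedAddCommGroup F] [NormedSpace ℝ F] {φ : E → F}

lemma contDiff_radialMean (hφ : ContDiff ℝ (⊤ : ℕ∞) φ) (k : ℕ) (a : E) :
    ContDiff ℝ (⊤ : ℕ∞) (radialMean k φ a) :=
  contDiff_intervalIntegral (contDiff_radialMean_integrand hφ k a) 0 1

lemma fderiv_radialMean (hφ : ContDiff ℝ (⊤ : ℕ∞) φ) (k : ℕ) (a x : E) :
    fderiv ℝ (radialMean k φ a) x = radialMean (k + 1) (fderiv ℝ φ) a x := by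
  have hφ1 : Differentiable ℝ φ := hφ.differentiable (by simp)
  have hint : ContDiff ℝ 1 _ :=
    (contDiff_radialMean_integrand hφ k a).of_le (by exact_mod_cast le_top)
  refine (hasFDerivAt_intervalIntegral_of_contDiff hint 0 1 x).fderiv.trans ?_
  refine intervalIntegral.integral_congr fun t _ => ?_
  have hcomp : Differentiable ℝ fun y : E => φ (a + t • (y - a)) := by fun_prop
  simp only [fderiv_fun_const_smul (hcomp x), fderiv_comp_segment hφ1, smul_smul, pow_succ]

/-- Integrating `d/dt (tᵏ⁺¹ φ(a + t(x - a)))` over `[0, 1]` gives the Euler-type identity. -/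
lemma fderiv_radialMean_radial [CompleteSpace F] (hφ : ContDiff ℝ (⊤ : ℕ∞) φ) (k : ℕ) (a x : E) :
    fderiv ℝ (radialMean k φ a) x (x - a) + ((k : ℝ) + 1) • radialMean k φ a x = φ x := by
  have hφ1 : Differentiable ℝ φ := hφ.differentiable (by simp)
  have hcont : Continuous φ := hφ.continuous
  have hcont' : Continuous (fderiv ℝ φ) := hφ.continuous_fderiv (by simp)
  have hint : Continuous fun t : ℝ => t ^ (k + 1) • fderiv ℝ φ (a + t • (x - a)) (x - a) := by
    fun_prop
  have hint' : Continuous fun t : ℝ => ((k : ℝ) + 1) • t ^ k • φ (a + t • (x - a)) := by fun_prop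
  have hderiv (t : ℝ) : HasDerivAt (fun t : ℝ => t ^ (k + 1) • φ (a + t • (x - a)))
      (t ^ (k + 1) • fderiv ℝ φ (a + t • (x - a)) (x - a) +
        ((k : ℝ) + 1) • t ^ k • φ (a + t • (x - a))) t := by
    simpa [mul_smul] using (hasDerivAt_pow (k + 1) t).fun_smul (hasDerivAt_comp_segment hφ1 a x t)
  have hleft : fderiv ℝ (radialMean k φ a) x (x - a) =
      ∫ t in (0 : ℝ)..1, t ^ (k + 1) • fderiv ℝ φ (a + t • (x - a)) (x - a) := by
    rw [fderiv_radialMean hφ]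
    exact map_radialMean (ContinuousLinearMap.apply ℝ F (x - a)) hcont' (k + 1) a x
  rw [hleft, radialMean, ← intervalIntegral.integral_smul,
    ← intervalIntegral.integral_add (hint.intervalIntegrable _ _) (hint'.intervalIntegrable _ _),
    intervalIntegral.integral_eq_sub_of_hasDerivAt (fun t _ => hderiv t)
      ((hint.add hint').intervalIntegrable _ _)]
  simp

end RadialMean

section Divergence

variable {n : ℕ}

/-- The trace of an endomorphism of `ℝⁿ`, as a continuous linear functional; the divergence of a
vector field is the trace of its derivative. -/
noncomputable def traceForm (n : ℕ) : ((Fin n → ℝ) →L[ℝ] Fin n → ℝ) →L[ℝ] ℝ :=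
  ∑ i, ContinuousLinearMap.proj i ∘L ContinuousLinearMap.apply ℝ (Fin n → ℝ) (Pi.single i 1)

lemma traceForm_apply (L : (Fin n → ℝ) →L[ℝ] Fin n → ℝ) :
    traceForm n L = ∑ i, L (Pi.single i 1) i := by
  simp [traceForm]

lemma traceForm_smulRight (f : (Fin n → ℝ) →L[ℝ] ℝ) (v : Fin n → ℝ) :
    traceForm n (f.smulRight v) = f v := by
  have hv : f v = ∑ i, v i • f (Pi.single i 1) := by
    conv_lhs => rw [pi_eq_sum_univ' v, map_sum]
    simp only [map_smul]
  simp [traceForm_apply, hv, mul_comm]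

lemma divg_eq_traceForm (u : (Fin n → ℝ) → Fin n → ℝ) (x : Fin n → ℝ) :
    divg u x = traceForm n (fderiv ℝ u x) :=
  (traceForm_apply _).symm

variable {u w : (Fin n → ℝ) → Fin n → ℝ} {g χ : (Fin n → ℝ) → ℝ} {x : Fin n → ℝ}

lemma divg_add (hu : DifferentiableAt ℝ u x) (hw : DifferentiableAt ℝ w x) :
    divg (fun y => u y + w y) x = divg u x + divg w x := by
  simp only [divg_eq_traceForm, fderiv_fun_add hu hw, map_add]

lemma divg_sub (hu : DifferentiableAt ℝ u x) (hw : DifferentiableAt ℝ w x) :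
    divg (fun y => u y - w y) x = divg u x - divg w x := by
  simp only [divg_eq_traceForm, fderiv_fun_sub hu hw, map_sub]

lemma divg_smul (hg : DifferentiableAt ℝ g x) (hu : DifferentiableAt ℝ u x) :
    divg (fun y => g y • u y) x = g x * divg u x + fderiv ℝ g x (u x) := by
  simp only [divg_eq_traceForm, fderiv_fun_smul hg hu, map_add, map_smul, smul_eq_mul,
    traceForm_smulRight]

lemma divg_fderiv_apply_smul (hχ : DifferentiableAt ℝ (fderiv ℝ χ) x)
    (hu : DifferentiableAt ℝ u x) (hw : DifferentiableAt ℝ w x) :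
    divg (fun y => fderiv ℝ χ y (u y) • w y) x = fderiv ℝ χ x (u x) * divg w x +
      (fderiv ℝ (fderiv ℝ χ) x (w x) (u x) + fderiv ℝ χ x (fderiv ℝ u x (w x))) := by
  rw [divg_smul (hχ.clm_apply hu) hw, fderiv_clm_apply hχ hu]
  simp [add_comm]

lemma divg_sub_const (a x : Fin n → ℝ) : divg (fun y => y - a) x = n := by
  simp [divg_eq_traceForm, traceForm_apply, fderiv_sub_const]

lemma divg_radialMean {φ : (Fin n → ℝ) → Fin n → ℝ} (hφ : ContDiff ℝ (⊤ : ℕ∞) φ)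
    (hdiv : ∀ x, divg φ x = 0) (k : ℕ) (a x : Fin n → ℝ) : divg (radialMean k φ a) x = 0 := by
  rw [divg_eq_traceForm, fderiv_radialMean hφ,
    map_radialMean (traceForm n) (hφ.continuous_fderiv (by simp))]
  simp only [radialMean, ← divg_eq_traceForm, hdiv, smul_zero, intervalIntegral.integral_zero]

end Divergence

section SolenoidalCutoff

universe u

variable {E : Type u} [NormedAddCommGroup E] [NormedSpace ℝ E] {χ : E → ℝ} {φ : E → E}
  {a x : E}

/-- Localisation of a divergence-free field `φ` by a cut-off `χ`. With the skew-symmetric potential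
`Aᵢⱼ = Pᵢ (x - a)ⱼ - Pⱼ (x - a)ᵢ`, where `P = radialMean k φ a`, one has `∑ⱼ ∂ⱼ Aᵢⱼ = φᵢ` in
dimension `k + 2`, and the localised field is `∑ⱼ ∂ⱼ (χ Aᵢⱼ)`, written out so that only `χ`, `φ`
and `P` appear. -/
noncomputable def solenoidalCutoff (k : ℕ) (χ : E → ℝ) (φ : E → E) (a x : E) : E :=
  χ x • φ x + fderiv ℝ χ x (x - a) • radialMean k φ a x -
    fderiv ℝ χ x (radialMean k φ a x) • (x - a)

lemma contDiff_solenoidalCutoff [FiniteDimensional ℝ E] (hχ : ContDiff ℝ (⊤ : ℕ∞) χ)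
    (hφ : ContDiff ℝ (⊤ : ℕ∞) φ) (k : ℕ) (a : E) :
    ContDiff ℝ (⊤ : ℕ∞) (solenoidalCutoff k χ φ a) := by
  have hP := contDiff_radialMean hφ k a
  have : ContDiff ℝ (⊤ : ℕ∞) (fderiv ℝ χ) := hχ.fderiv_right (by simp)
  unfold solenoidalCutoff
  fun_prop

lemma divg_solenoidalCutoff {k : ℕ} {χ : (Fin (k + 2) → ℝ) → ℝ}
    {φ : (Fin (k + 2) → ℝ) → Fin (k + 2) → ℝ} (hχ : ContDiff ℝ (⊤ : ℕ∞) χ)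
    (hφ : ContDiff ℝ (⊤ : ℕ∞) φ) (hdiv : ∀ x, divg φ x = 0) (a x : Fin (k + 2) → ℝ) :
    divg (solenoidalCutoff k χ φ a) x = 0 := by
  set P := radialMean k φ a
  have hφ' : DifferentiableAt ℝ φ x := hφ.differentiable (by simp) x
  have hχ' : DifferentiableAt ℝ χ x := hχ.differentiable (by simp) x
  have hP : DifferentiableAt ℝ P x := (contDiff_radialMean hφ k a).differentiable (by simp) x
  have hDχ : DifferentiableAt ℝ (fderiv ℝ χ) x :=
    (hχ.fderiv_right (m := (⊤ : ℕ∞)) (by simp)).differentiable (by simp) x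
  have hid : DifferentiableAt ℝ (fun y => y - a) x := by fun_prop
  have hsymm : IsSymmSndFDerivAt ℝ χ x :=
    hχ.contDiffAt.isSymmSndFDerivAt (by simpa using WithTop.coe_le_coe.2 (le_top : (2 : ℕ∞) ≤ ⊤))
  have hradial : fderiv ℝ χ x (fderiv ℝ P x (x - a)) + (k + 1) * fderiv ℝ χ x (P x) =
      fderiv ℝ χ x (φ x) := by
    rw [← fderiv_radialMean_radial hφ k a x, map_add, map_smul, smul_eq_mul]
  have hDid : fderiv ℝ (fun y => y - a) x (P x) = P x := by simp [fderiv_sub_const]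
  unfold solenoidalCutoff
  rw [divg_sub ((hχ'.fun_smul hφ').fun_add ((hDχ.clm_apply hid).fun_smul hP))
      ((hDχ.clm_apply hP).fun_smul hid),
    divg_add (hχ'.fun_smul hφ') ((hDχ.clm_apply hid).fun_smul hP), divg_smul hχ' hφ',
    divg_fderiv_apply_smul hDχ hid hP, divg_fderiv_apply_smul hDχ hP hid, hdiv,
    divg_radialMean hφ hdiv, divg_sub_const, hsymm.eq (P x) (x - a), hDid, ← hradial]
  push_cast
  ring

lemma norm_solenoidalCutoff_sub_smul_le (k : ℕ) (χ : E → ℝ) (φ : E → E) (a x : E) :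
    ‖solenoidalCutoff k χ φ a x - χ x • φ x‖ ≤
      2 * ‖fderiv ℝ χ x‖ * ‖x - a‖ * ‖radialMean k φ a x‖ := by
  set P := radialMean k φ a x
  have hsplit : solenoidalCutoff k χ φ a x - χ x • φ x =
      fderiv ℝ χ x (x - a) • P - fderiv ℝ χ x P • (x - a) := by
    unfold solenoidalCutoff
    abel
  calc ‖solenoidalCutoff k χ φ a x - χ x • φ x‖
      ≤ ‖fderiv ℝ χ x (x - a)‖ * ‖P‖ + ‖fderiv ℝ χ x P‖ * ‖x - a‖ := by
        rw [hsplit, ← norm_smul, ← norm_smul]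
        exact norm_sub_le _ _
    _ ≤ ‖fderiv ℝ χ x‖ * ‖x - a‖ * ‖P‖ + ‖fderiv ℝ χ x‖ * ‖P‖ * ‖x - a‖ := by
        gcongr <;> exact ContinuousLinearMap.le_opNorm _ _
    _ = 2 * ‖fderiv ℝ χ x‖ * ‖x - a‖ * ‖P‖ := by ring

lemma solenoidalCutoff_eq_smul_of_fderiv_eq_zero (h : fderiv ℝ χ x = 0) (k : ℕ) (φ : E → E)
    (a : E) : solenoidalCutoff k χ φ a x = χ x • φ x := by
  simp [solenoidalCutoff, h]

end SolenoidalCutoff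

section SegmentMean

variable {E : Type*} [NormedAddCommGroup E] [NormedSpace ℝ E] [MeasurableSpace E]

/-- The mean of `g` over the segment from `a` to `x`. -/
noncomputable def segmentMean (g : E → ℝ≥0∞) (a x : E) : ℝ≥0∞ :=
  ∫⁻ t in Ioc (0 : ℝ) 1, g (a + t • (x - a))

variable [BorelSpace E] [FiniteDimensional ℝ E] {μ : Measure E} [μ.IsAddHaarMeasure]
  {g : E → ℝ≥0∞}

lemma measurable_comp_segment (hg : Measurable g) :
    Measurable fun q : (E × E) × ℝ => g (q.1.1 + q.2 • (q.1.2 - q.1.1)) :=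
  hg.comp (by fun_prop)

lemma measurable_segmentMean (hg : Measurable g) :
    Measurable fun q : E × E => segmentMean g q.1 q.2 :=
  (measurable_comp_segment hg).lintegral_prod_right'

lemma lintegral_comp_add_smul_le (μ : Measure E) [μ.IsAddHaarMeasure] (hg : Measurable g) {c : ℝ}
    (hc : 1 / 2 ≤ c) (b : E) :
    ∫⁻ x, g (b + c • x) ∂μ ≤ 2 ^ Module.finrank ℝ E * ∫⁻ y, g y ∂μ := by
  have hc0 : 0 < c := by linarith
  have hfactor : |(c ^ Module.finrank ℝ E)⁻¹| ≤ 2 ^ Module.finrank ℝ E := by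
    rw [abs_of_pos (by positivity), ← inv_pow]
    gcongr
    rw [inv_le_comm₀ hc0 two_pos]
    linarith
  calc ∫⁻ x, g (b + c • x) ∂μ = ∫⁻ y, g (b + y) ∂(μ.map (c • ·)) :=
        (lintegral_map (hg.comp (measurable_const_add b)) (measurable_const_smul c)).symm
    _ = ENNReal.ofReal |(c ^ Module.finrank ℝ E)⁻¹| * ∫⁻ y, g y ∂μ := by
        rw [Measure.map_addHaar_smul μ hc0.ne', lintegral_smul_measure,
          lintegral_add_left_eq_self g b, smul_eq_mul]
    _ ≤ ENNReal.ofReal (2 ^ Module.finrank ℝ E) * ∫⁻ y, g y ∂μ := by gcongr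
    _ = 2 ^ Module.finrank ℝ E * ∫⁻ y, g y ∂μ := by
        rw [ENNReal.ofReal_pow zero_le_two, ENNReal.ofReal_ofNat]

/-- One integrates first in the end point that is nearer to `a + t • (x - a)`, so that the map is
dilating by a factor at least `1 / 2`. -/
lemma setLIntegral_setLIntegral_comp_segment_le (hg : Measurable g) {A B : Set E} (hAB : A ⊆ B)
    (t : ℝ) :
    ∫⁻ a in A, ∫⁻ x in B, g (a + t • (x - a)) ∂μ ∂μ ≤
      2 ^ Module.finrank ℝ E * (∫⁻ y, g y ∂μ) * μ B := by
  have hinner {s : ℝ} (hs : 1 / 2 ≤ s) (b : E) (S : Set E) :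
      ∫⁻ x in S, g (b + s • x) ∂μ ≤ 2 ^ Module.finrank ℝ E * ∫⁻ y, g y ∂μ :=
    (setLIntegral_le_lintegral _ _).trans (lintegral_comp_add_smul_le μ hg hs b)
  have hslice : Measurable fun q : E × E => g (q.1 + t • (q.2 - q.1)) := hg.comp (by fun_prop)
  rcases le_total (1 / 2) t with ht | ht
  · have hrw (a x : E) : a + t • (x - a) = (a - t • a) + t • x := by rw [smul_sub]; abel
    calc ∫⁻ a in A, ∫⁻ x in B, g (a + t • (x - a)) ∂μ ∂μ
        ≤ ∫⁻ _ in A, 2 ^ Module.finrank ℝ E * ∫⁻ y, g y ∂μ ∂μ := by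
          simp only [hrw]
          exact lintegral_mono fun a => hinner ht _ B
      _ ≤ 2 ^ Module.finrank ℝ E * (∫⁻ y, g y ∂μ) * μ B := by rw [setLIntegral_const]; gcongr
  · have hrw (a x : E) : a + t • (x - a) = t • x + (1 - t) • a := by module
    calc ∫⁻ a in A, ∫⁻ x in B, g (a + t • (x - a)) ∂μ ∂μ
        = ∫⁻ x in B, ∫⁻ a in A, g (a + t • (x - a)) ∂μ ∂μ :=
          lintegral_lintegral_swap hslice.aemeasurable
      _ ≤ ∫⁻ _ in B, 2 ^ Module.finrank ℝ E * ∫⁻ y, g y ∂μ ∂μ := by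
          simp only [hrw]
          exact lintegral_mono fun x => hinner (by linarith) _ A
      _ = 2 ^ Module.finrank ℝ E * (∫⁻ y, g y ∂μ) * μ B := setLIntegral_const _ _

lemma lintegral_segmentMean_le (hg : Measurable g) {A B : Set E} (hAB : A ⊆ B) :
    ∫⁻ a in A, ∫⁻ x in B, segmentMean g a x ∂μ ∂μ ≤
      2 ^ Module.finrank ℝ E * (∫⁻ y, g y ∂μ) * μ B := by
  have hm := measurable_comp_segment hg
  have hswap (a : E) : ∫⁻ x in B, segmentMean g a x ∂μ =
      ∫⁻ t in Ioc (0 : ℝ) 1, ∫⁻ x in B, g (a + t • (x - a)) ∂μ :=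
    lintegral_lintegral_swap (hm.comp (by fun_prop :
      Measurable fun p : E × ℝ => ((a, p.1), p.2))).aemeasurable
  have hinner : Measurable fun p : E × ℝ => ∫⁻ x in B, g (p.1 + p.2 • (x - p.1)) ∂μ :=
    Measurable.lintegral_prod_right' (hm.comp (by fun_prop :
      Measurable fun q : (E × ℝ) × E => ((q.1.1, q.2), q.1.2)))
  calc ∫⁻ a in A, ∫⁻ x in B, segmentMean g a x ∂μ ∂μ
      = ∫⁻ t in Ioc (0 : ℝ) 1, ∫⁻ a in A, ∫⁻ x in B, g (a + t • (x - a)) ∂μ ∂μ := by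
        simp only [hswap]
        exact lintegral_lintegral_swap hinner.aemeasurable
    _ ≤ ∫⁻ _ in Ioc (0 : ℝ) 1, 2 ^ Module.finrank ℝ E * (∫⁻ y, g y ∂μ) * μ B :=
        lintegral_mono fun t => setLIntegral_setLIntegral_comp_segment_le hg hAB t
    _ = 2 ^ Module.finrank ℝ E * (∫⁻ y, g y ∂μ) * μ B := by simp

lemma exists_lintegral_segmentMean_le (hg : Measurable g) (c : E) {R : ℝ} (hR : 0 < R) :
    ∃ a ∈ closedBall c (R / 2), ∫⁻ x in closedBall c (2 * R), segmentMean g a x ∂μ ≤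
      8 ^ Module.finrank ℝ E * ∫⁻ y, g y ∂μ := by
  have hpos : μ (closedBall c (R / 2)) ≠ 0 := (measure_closedBall_pos μ c (by positivity)).ne'
  have hfin : μ (closedBall c (R / 2)) ≠ ∞ := (isCompact_closedBall c _).measure_lt_top.ne
  have hmeas : Measurable fun a => ∫⁻ x in closedBall c (2 * R), segmentMean g a x ∂μ :=
    (measurable_segmentMean hg).lintegral_prod_right'
  obtain ⟨a, ha, hle⟩ := exists_le_setLAverage hpos hfin hmeas.aemeasurable
  refine ⟨a, ha, hle.trans ?_⟩
  have hvol : μ (closedBall c (2 * R)) =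
      4 ^ Module.finrank ℝ E * μ (closedBall c (R / 2)) := by
    rw [show 2 * R = 4 * (R / 2) by ring,
      Measure.addHaar_closedBall_mul μ c (by norm_num : (0 : ℝ) ≤ 4) (by positivity),
      ENNReal.ofReal_pow (by norm_num), ENNReal.ofReal_ofNat,
      Measure.addHaar_closedBall_center μ c (R / 2)]
  rw [setLAverage_eq, ENNReal.div_le_iff hpos hfin]
  calc ∫⁻ a in closedBall c (R / 2), ∫⁻ x in closedBall c (2 * R), segmentMean g a x ∂μ ∂μ
      ≤ 2 ^ Module.finrank ℝ E * (∫⁻ y, g y ∂μ) * μ (closedBall c (2 * R)) :=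
        lintegral_segmentMean_le hg (closedBall_subset_closedBall (by linarith))
    _ = 8 ^ Module.finrank ℝ E * (∫⁻ y, g y ∂μ) * μ (closedBall c (R / 2)) := by
        rw [hvol, show (8 : ℝ≥0∞) = 2 * 4 by norm_num, mul_pow]
        ring

end SegmentMean

section PowerInequalities

variable {α : Type*} [MeasurableSpace α] {μ : Measure α} {f : α → ℝ≥0∞} {p q : ℝ}

lemma add_rpow_le_two_rpow_mul (hp : 1 ≤ p) (hpq : p ≤ q) (a b : ℝ≥0∞) :
    (a + b) ^ p ≤ 2 ^ q * (a ^ p + b ^ p) :=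
  (ENNReal.rpow_add_le_mul_rpow_add_rpow a b hp).trans <| by
    gcongr
    · exact one_le_two
    · linarith

lemma lintegral_rpow_le_of_le (hf : AEMeasurable f μ) (hp : 0 < p) (hpq : p ≤ q) :
    ∫⁻ x, f x ^ p ∂μ ≤ (∫⁻ x, f x ^ q ∂μ) ^ (p / q) * μ univ ^ (1 - p / q) := by
  have hnorm := ENNReal.rpow_le_rpow
    (eLpNorm'_le_eLpNorm'_mul_rpow_measure_univ hp hpq hf.aestronglyMeasurable) hp.le
  simp only [eLpNorm', enorm_eq_self] at hnorm
  rw [ENNReal.mul_rpow_of_nonneg _ _ hp.le, ← ENNReal.rpow_mul, ← ENNReal.rpow_mul,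
    ← ENNReal.rpow_mul, one_div_mul_cancel hp.ne', ENNReal.rpow_one] at hnorm
  convert hnorm using 3
  · ring
  · field_simp

lemma lintegral_rpow_le_measure_univ_rpow_mul (hf : AEMeasurable f μ) (hp : 1 ≤ p) :
    (∫⁻ x, f x ∂μ) ^ p ≤ μ univ ^ (p - 1) * ∫⁻ x, f x ^ p ∂μ := by
  have hp0 : 0 < p := by linarith
  have hmean := ENNReal.rpow_le_rpow (lintegral_rpow_le_of_le hf one_pos hp) hp0.le
  simp only [ENNReal.rpow_one] at hmean
  rw [ENNReal.mul_rpow_of_nonneg _ _ hp0.le, ← ENNReal.rpow_mul, ← ENNReal.rpow_mul,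
    one_div_mul_cancel hp0.ne', ENNReal.rpow_one, mul_comm] at hmean
  convert hmean using 3
  field_simp

end PowerInequalities

section TailDensity

variable {E : Type*} [NormedAddCommGroup E] {f g h : E → ℝ≥0∞} {δ : ℝ≥0∞} {M p q : ℝ} {y : E}

/-- The tail of `f ^ p` outside the ball of radius `M`, plus the small multiple `δ ^ (p - 1)` of
`f ^ p`. It dominates `p`-th powers of segment means of `f` when the segment meets the ball of
radius `M` in a set of parameters of measure at most `δ`. -/
noncomputable def tailDensity (δ : ℝ≥0∞) (M p : ℝ) (f : E → ℝ≥0∞) (y : E) : ℝ≥0∞ :=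
  δ ^ (p - 1) * f y ^ p + (ball 0 M)ᶜ.indicator (fun y => f y ^ p) y

lemma rpow_le_tailDensity (hy : y ∉ ball 0 M) : f y ^ p ≤ tailDensity δ M p f y := by
  rw [tailDensity, indicator_of_mem (mem_compl hy)]
  exact le_add_self

lemma tailDensity_le_two_mul_rpow (hδ : δ ≤ 1) (hp : 1 ≤ p) :
    tailDensity δ M p f y ≤ 2 * f y ^ p := by
  rw [two_mul, tailDensity]
  gcongr
  · exact mul_le_of_le_one_left' (ENNReal.rpow_le_one hδ (by linarith))
  · exact indicator_le_self _ (fun y => f y ^ p) y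

lemma tailDensity_le_add (hp : 1 ≤ p) (hpq : p ≤ q) (hfgh : f y ≤ g y + h y) :
    tailDensity δ M p f y ≤ 2 ^ q * (tailDensity δ M p g y + tailDensity δ M p h y) := by
  have hpow : f y ^ p ≤ 2 ^ q * (g y ^ p + h y ^ p) :=
    (ENNReal.rpow_le_rpow hfgh (by linarith)).trans (add_rpow_le_two_rpow_mul hp hpq _ _)
  by_cases hy : y ∈ ball 0 M
  · simp only [tailDensity, indicator_of_notMem (notMem_compl_iff.2 hy), add_zero]
    calc δ ^ (p - 1) * f y ^ p ≤ δ ^ (p - 1) * (2 ^ q * (g y ^ p + h y ^ p)) := by gcongr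
      _ = _ := by ring
  · simp only [tailDensity, indicator_of_mem (mem_compl hy)]
    calc δ ^ (p - 1) * f y ^ p + f y ^ p
        ≤ δ ^ (p - 1) * (2 ^ q * (g y ^ p + h y ^ p)) + 2 ^ q * (g y ^ p + h y ^ p) := by gcongr
      _ = _ := by ring

variable [MeasurableSpace E] {μ : Measure E}

lemma lintegral_tailDensity_le_add (hδ : δ ≤ 1) (hp : 1 ≤ p) (hpq : p ≤ q) (hh : AEMeasurable h μ)
    (hfgh : ∀ y, f y ≤ g y + h y) :
    ∫⁻ y, tailDensity δ M p f y ∂μ ≤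
      2 ^ q * 2 * (∫⁻ y, tailDensity δ M p g y ∂μ + ∫⁻ y, h y ^ p ∂μ) := by
  have hconst : (2 : ℝ≥0∞) ^ q * 2 ≠ ∞ := ENNReal.mul_ne_top
    (ENNReal.rpow_ne_top_of_nonneg (by linarith) ENNReal.ofNat_ne_top) ENNReal.ofNat_ne_top
  rw [← lintegral_add_right' _ (hh.pow_const p), ← lintegral_const_mul' _ _ hconst]
  refine lintegral_mono fun y => (tailDensity_le_add hp hpq (hfgh y)).trans ?_
  rw [mul_assoc, mul_add 2]
  gcongr
  · exact le_mul_of_one_le_left' one_le_two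
  · exact tailDensity_le_two_mul_rpow hδ hp

variable [BorelSpace E]

lemma measurable_tailDensity (hf : Measurable f) (δ : ℝ≥0∞) (M p : ℝ) :
    Measurable (tailDensity δ M p f) :=
  ((hf.pow_const p).const_mul _).add ((hf.pow_const p).indicator (measurableSet_ball.compl))

lemma lintegral_tailDensity (hf : AEMeasurable f μ) (δ : ℝ≥0∞) (M p : ℝ) :
    ∫⁻ y, tailDensity δ M p f y ∂μ =
      δ ^ (p - 1) * ∫⁻ y, f y ^ p ∂μ + ∫⁻ y in (ball 0 M)ᶜ, f y ^ p ∂μ := by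
  have hfp : AEMeasurable (fun y => f y ^ p) μ := hf.pow_const p
  unfold tailDensity
  rw [lintegral_add_left' (hfp.const_mul _), lintegral_const_mul'' _ hfp,
    lintegral_indicator (measurableSet_ball.compl)]

end TailDensity

section SegmentMeanBound

variable {E : Type*} [NormedAddCommGroup E] [NormedSpace ℝ E] {M R : ℝ} {a x : E}

lemma volume_segment_mem_ball_le (hR : 0 < R) (hxa : R / 2 ≤ ‖x - a‖) :
    volume {t : ℝ | a + t • (x - a) ∈ ball 0 M} ≤ ENNReal.ofReal (4 * M / R) := by
  refine (Real.volume_le_diam _).trans (ediam_le fun t ht u hu => ?_)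
  rw [edist_dist, Real.dist_eq]
  refine ENNReal.ofReal_le_ofReal ?_
  have hdist : |t - u| * ‖x - a‖ ≤ 2 * M := by
    calc |t - u| * ‖x - a‖ = ‖(a + t • (x - a)) - (a + u • (x - a))‖ := by
          rw [← Real.norm_eq_abs, ← norm_smul, add_sub_add_left_eq_sub, sub_smul]
      _ ≤ M + M := (norm_sub_le _ _).trans
            (add_le_add (mem_ball_zero_iff.1 ht).le (mem_ball_zero_iff.1 hu).le)
      _ = 2 * M := by ring
  rw [le_div_iff₀ hR]
  nlinarith [abs_nonneg (t - u)]

lemma segmentMean_indicator {B : Set E} (hB : Convex ℝ B) (ha : a ∈ B) (hx : x ∈ B)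
    (g : E → ℝ≥0∞) : segmentMean (B.indicator g) a x = segmentMean g a x :=
  setLIntegral_congr_fun measurableSet_Ioc fun _ ht =>
    indicator_of_mem (hB.add_smul_sub_mem ha hx ⟨ht.1.le, ht.2⟩) g

lemma segmentMean_mono {f g : E → ℝ≥0∞} (h : ∀ y, f y ≤ g y) (a x : E) :
    segmentMean f a x ≤ segmentMean g a x :=
  lintegral_mono fun _ => h _

lemma enorm_radialMean_le_segmentMean {E F : Type*} [NormedAddCommGroup E] [NormedSpace ℝ E]
    [NormedAddCommGroup F] [NormedSpace ℝ F] (k : ℕ) (φ : E → F) (a x : E) :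
    ‖radialMean k φ a x‖ₑ ≤ segmentMean (fun y => ‖φ y‖ₑ) a x := by
  rw [radialMean, intervalIntegral.integral_of_le zero_le_one]
  refine (enorm_integral_le_lintegral_enorm _).trans
    (setLIntegral_mono' measurableSet_Ioc fun t ht => ?_)
  rw [enorm_smul, Real.enorm_eq_ofReal (pow_nonneg ht.1.le k)]
  exact mul_le_of_le_one_left' (ENNReal.ofReal_le_one.2 (pow_le_one₀ ht.1.le ht.2))

variable [MeasurableSpace E] [BorelSpace E]

/-- Hölder's inequality, applied separately to the part of the segment inside the ball of radius
`M`, where it gains the factor `δ ^ (p - 1)`, and to the part outside. -/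
lemma segmentMean_rpow_le {f : E → ℝ≥0∞} (hf : Measurable f) {p : ℝ} (hp : 1 ≤ p) {δ : ℝ≥0∞}
    (hδ : volume {t : ℝ | a + t • (x - a) ∈ ball 0 M} ≤ δ) :
    segmentMean f a x ^ p ≤ 2 ^ p * segmentMean (tailDensity δ M p f) a x := by
  set T : Set ℝ := {t | a + t • (x - a) ∈ ball 0 M}
  set μ : Measure ℝ := volume.restrict (Ioc 0 1) with hμ
  set F : ℝ → ℝ≥0∞ := fun t => f (a + t • (x - a))
  have hseg : Measurable fun t : ℝ => a + t • (x - a) :=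
    Continuous.measurable (by fun_prop)
  have hTm : MeasurableSet T := measurableSet_ball.preimage hseg
  have hF : Measurable F := hf.comp hseg
  have hFp : Measurable fun t => F t ^ p := hF.pow_const p
  have hin : (∫⁻ t in T, F t ∂μ) ^ p ≤ δ ^ (p - 1) * ∫⁻ t, F t ^ p ∂μ := by
    refine (lintegral_rpow_le_measure_univ_rpow_mul hF.aemeasurable hp).trans ?_
    have : 0 ≤ p - 1 := by linarith
    gcongr ?_ ^ _ * ?_
    · rw [Measure.restrict_apply_univ]
      exact (Measure.restrict_apply_le _ _).trans hδ
    · exact setLIntegral_le_lintegral _ _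
  have hout : (∫⁻ t in Tᶜ, F t ∂μ) ^ p ≤ ∫⁻ t in Tᶜ, F t ^ p ∂μ := by
    refine (lintegral_rpow_le_measure_univ_rpow_mul hF.aemeasurable hp).trans
      (mul_le_of_le_one_left' (ENNReal.rpow_le_one ?_ (by linarith)))
    rw [Measure.restrict_apply_univ]
    exact (measure_mono (subset_univ _)).trans (by simp [hμ])
  have hdensity (t : ℝ) : tailDensity δ M p f (a + t • (x - a)) =
      δ ^ (p - 1) * F t ^ p + Tᶜ.indicator (fun t => F t ^ p) t := rfl
  calc segmentMean f a x ^ p = (∫⁻ t in T, F t ∂μ + ∫⁻ t in Tᶜ, F t ∂μ) ^ p := by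
        rw [lintegral_add_compl F hTm, segmentMean]
    _ ≤ 2 ^ p * ((∫⁻ t in T, F t ∂μ) ^ p + (∫⁻ t in Tᶜ, F t ∂μ) ^ p) :=
        add_rpow_le_two_rpow_mul hp le_rfl _ _
    _ ≤ 2 ^ p * (δ ^ (p - 1) * ∫⁻ t, F t ^ p ∂μ + ∫⁻ t in Tᶜ, F t ^ p ∂μ) := by gcongr
    _ = 2 ^ p * segmentMean (tailDensity δ M p f) a x := by
        simp only [segmentMean, hdensity]
        rw [lintegral_add_left (hFp.const_mul _), lintegral_const_mul _ hFp,
          lintegral_indicator hTm.compl]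

end SegmentMeanBound

/-- `χ` is a smooth cut-off function for the ball of radius `R` around `c`, supported in the
concentric ball of radius `2 * R`. -/
structure IsCutoff {E : Type*} [NormedAddCommGroup E] [NormedSpace ℝ E] (χ : E → ℝ) (c : E)
    (R : ℝ) : Prop where
  contDiff : ContDiff ℝ (⊤ : ℕ∞) χ
  mem_Icc : ∀ x, χ x ∈ Icc (0 : ℝ) 1
  eq_one : ∀ x ∈ closedBall c R, χ x = 1
  eq_zero : ∀ x ∉ ball c (2 * R), χ x = 0

namespace IsCutoff

section Properties

variable {E : Type*} [NormedAddCommGroup E] [NormedSpace ℝ E] {χ : E → ℝ} {φ : E → E} {a c x : E}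
  {R : ℝ}

lemma fderiv_eq_zero_of_mem_ball (hχ : IsCutoff χ c R) (hx : x ∈ ball c R) :
    fderiv ℝ χ x = 0 := by
  have hloc : χ =ᶠ[𝓝 x] fun _ => (1 : ℝ) := by
    filter_upwards [isOpen_ball.mem_nhds hx] with y hy
    exact hχ.eq_one y (ball_subset_closedBall hy)
  rw [hloc.fderiv_eq, fderiv_const_apply]

lemma fderiv_eq_zero_of_notMem_closedBall (hχ : IsCutoff χ c R) (hx : x ∉ closedBall c (2 * R)) :
    fderiv ℝ χ x = 0 := by
  have hloc : χ =ᶠ[𝓝 x] fun _ => (0 : ℝ) := by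
    filter_upwards [isClosed_closedBall.isOpen_compl.mem_nhds hx] with y hy
    exact hχ.eq_zero y fun h => hy (ball_subset_closedBall h)
  rw [hloc.fderiv_eq, fderiv_const_apply]

lemma solenoidalCutoff_eq_of_mem_ball (hχ : IsCutoff χ c R) (hx : x ∈ ball c R) (k : ℕ)
    (φ : E → E) (a : E) : solenoidalCutoff k χ φ a x = φ x := by
  rw [solenoidalCutoff_eq_smul_of_fderiv_eq_zero (hχ.fderiv_eq_zero_of_mem_ball hx),
    hχ.eq_one x (ball_subset_closedBall hx), one_smul]

lemma solenoidalCutoff_eq_zero_of_notMem_closedBall (hχ : IsCutoff χ c R)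
    (hx : x ∉ closedBall c (2 * R)) (k : ℕ) (φ : E → E) (a : E) :
    solenoidalCutoff k χ φ a x = 0 := by
  rw [solenoidalCutoff_eq_smul_of_fderiv_eq_zero (hχ.fderiv_eq_zero_of_notMem_closedBall hx),
    hχ.eq_zero x fun h => hx (ball_subset_closedBall h), zero_smul]

lemma tsupport_solenoidalCutoff_subset_closedBall (hχ : IsCutoff χ c R) (k : ℕ) (φ : E → E)
    (a : E) : tsupport (solenoidalCutoff k χ φ a) ⊆ closedBall c (2 * R) :=
  closure_minimal (fun _ hx => by_contra fun hout =>
    hx (hχ.solenoidalCutoff_eq_zero_of_notMem_closedBall hout k φ a)) isClosed_closedBall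

lemma tsupport_solenoidalCutoff_subset_union (hχ : IsCutoff χ c R) (k : ℕ) (φ : E → E) (a : E) :
    tsupport (solenoidalCutoff k χ φ a) ⊆ tsupport φ ∪ (ball c R)ᶜ := by
  refine closure_minimal (fun x hx => ?_)
    ((isClosed_tsupport φ).union isOpen_ball.isClosed_compl)
  by_cases hxR : x ∈ ball c R
  · rw [Function.mem_support, hχ.solenoidalCutoff_eq_of_mem_ball hxR] at hx
    exact .inl (subset_tsupport φ hx)
  · exact .inr hxR

lemma hasCompactSupport_solenoidalCutoff [FiniteDimensional ℝ E] (hχ : IsCutoff χ c R) (k : ℕ)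
    (φ : E → E) (a : E) : HasCompactSupport (solenoidalCutoff k χ φ a) :=
  (isCompact_closedBall c (2 * R)).of_isClosed_subset (isClosed_tsupport _)
    (hχ.tsupport_solenoidalCutoff_subset_closedBall k φ a)

lemma enorm_smul_le {F : Type*} [NormedAddCommGroup F] [NormedSpace ℝ F] (hχ : IsCutoff χ c R)
    (x : E) (v : F) : ‖χ x • v‖ₑ ≤ ‖v‖ₑ := by
  rw [enorm_smul, Real.enorm_eq_ofReal (hχ.mem_Icc x).1]
  exact mul_le_of_le_one_left' (ENNReal.ofReal_le_one.2 (hχ.mem_Icc x).2)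

lemma enorm_one_sub_smul_le {F : Type*} [NormedAddCommGroup F] [NormedSpace ℝ F]
    (hχ : IsCutoff χ c R) (x : E) (v : F) : ‖(1 - χ x) • v‖ₑ ≤ ‖v‖ₑ := by
  have h := hχ.mem_Icc x
  rw [enorm_smul, Real.enorm_eq_ofReal (sub_nonneg.2 h.2)]
  exact mul_le_of_le_one_left' (ENNReal.ofReal_le_one.2 (by linarith [h.1]))

end Properties

end IsCutoff

section Cutoff

variable {E : Type*} [NormedAddCommGroup E] [NormedSpace ℝ E]

lemma fderiv_comp_smul_sub {f : E → ℝ} (hf : Differentiable ℝ f) (b : ℝ) (c x : E) :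
    fderiv ℝ (fun y => f (b • (y - c))) x = b • fderiv ℝ f (b • (x - c)) := by
  have hscale : HasFDerivAt (fun y : E => b • (y - c)) (b • ContinuousLinearMap.id ℝ E) x :=
    ((hasFDerivAt_id x).sub_const c).const_smul b
  refine ((hf _).hasFDerivAt.comp x hscale).fderiv.trans ?_
  rw [ContinuousLinearMap.comp_smul, ContinuousLinearMap.comp_id]

variable (E) in
lemma exists_isCutoff [FiniteDimensional ℝ E] :
    ∃ C : ℝ, 1 ≤ C ∧ ∀ (c : E) (R : ℝ), 0 < R →
      ∃ χ : E → ℝ, IsCutoff χ c R ∧ ∀ x, ‖fderiv ℝ χ x‖ ≤ C / R := by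
  let f : ContDiffBump (0 : E) := ⟨1, 2, one_pos, one_lt_two⟩
  have hf : ContDiff ℝ (⊤ : ℕ∞) f := f.contDiff
  obtain ⟨C, hC⟩ := (hf.continuous_fderiv (by simp)).bounded_above_of_compact_support
    (f.hasCompactSupport.fderiv ℝ)
  refine ⟨max 1 C, le_max_left _ _, fun c R hR => ⟨fun x => f (R⁻¹ • (x - c)),
    ⟨hf.comp (by fun_prop), fun x => ⟨f.nonneg, f.le_one⟩, fun x hx => ?_, fun x hx => ?_⟩,
    fun x => ?_⟩⟩
  · refine f.one_of_mem_closedBall ?_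
    rw [mem_closedBall_zero_iff, norm_smul, norm_inv, Real.norm_of_nonneg hR.le,
      inv_mul_le_iff₀ hR]
    simpa [f, ← dist_eq_norm] using hx
  · refine f.zero_of_le_dist ?_
    rw [dist_zero_right, norm_smul, norm_inv, Real.norm_of_nonneg hR.le, le_inv_mul_iff₀ hR]
    simpa [f, ← dist_eq_norm, mul_comm] using hx
  · rw [fderiv_comp_smul_sub (hf.differentiable (by simp)), norm_smul, norm_inv,
      Real.norm_of_nonneg hR.le, div_eq_inv_mul]
    gcongr
    exact (hC _).trans (le_max_right _ _)

end Cutoff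

section CutoffError

variable {E : Type*} [NormedAddCommGroup E] [NormedSpace ℝ E] {χ : E → ℝ} {φ : E → E} {a x : E}
  {C M R p s : ℝ}

lemma enorm_solenoidalCutoff_sub_smul_le (hR : 0 < R) (hDχ : ‖fderiv ℝ χ x‖ ≤ C / R)
    (hxa : ‖x - a‖ ≤ 3 * R) (k : ℕ) (φ : E → E) :
    ‖solenoidalCutoff k χ φ a x - χ x • φ x‖ₑ ≤
      ENNReal.ofReal (6 * C) * ‖radialMean k φ a x‖ₑ := by
  have hC : 0 ≤ C / R := (norm_nonneg _).trans hDχ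
  have hnorm : ‖solenoidalCutoff k χ φ a x - χ x • φ x‖ ≤ 6 * C * ‖radialMean k φ a x‖ :=
    calc ‖solenoidalCutoff k χ φ a x - χ x • φ x‖
        ≤ 2 * ‖fderiv ℝ χ x‖ * ‖x - a‖ * ‖radialMean k φ a x‖ :=
          norm_solenoidalCutoff_sub_smul_le k χ φ a x
      _ ≤ 2 * (C / R) * (3 * R) * ‖radialMean k φ a x‖ := by gcongr
      _ = 6 * C * ‖radialMean k φ a x‖ := by field_simp; ring
  rw [← ofReal_norm, ← ofReal_norm, ← ENNReal.ofReal_mul' (norm_nonneg _)]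
  exact ENNReal.ofReal_le_ofReal hnorm

variable [MeasurableSpace E] [BorelSpace E]

lemma enorm_solenoidalCutoff_sub_smul_rpow_le (hχ : IsCutoff χ 0 R) (hR : 0 < R)
    (hDχ : ∀ x, ‖fderiv ℝ χ x‖ ≤ C / R) (hφ : Continuous φ) (ha : a ∈ closedBall 0 (R / 2))
    (k : ℕ) (M : ℝ) (hp : 1 ≤ p) (x : E) :
    ‖solenoidalCutoff k χ φ a x - χ x • φ x‖ₑ ^ p ≤ (closedBall 0 (2 * R)).indicator (fun x =>
      ENNReal.ofReal (12 * C) ^ p * segmentMean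
        (tailDensity (ENNReal.ofReal (4 * M / R)) M p fun y => ‖φ y‖ₑ) a x) x := by
  have hp0 : 0 ≤ p := by linarith
  by_cases hshell : x ∈ closedBall 0 (2 * R) \ ball 0 R
  · have ha' : ‖a‖ ≤ R / 2 := mem_closedBall_zero_iff.1 ha
    have hxR : R ≤ ‖x‖ := by simpa using hshell.2
    have hx2R : ‖x‖ ≤ 2 * R := mem_closedBall_zero_iff.1 hshell.1
    have hsegment : volume {t : ℝ | a + t • (x - a) ∈ ball 0 M} ≤ ENNReal.ofReal (4 * M / R) :=
      volume_segment_mem_ball_le hR (by linarith [norm_sub_norm_le x a])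
    rw [indicator_of_mem hshell.1]
    calc ‖solenoidalCutoff k χ φ a x - χ x • φ x‖ₑ ^ p
        ≤ (ENNReal.ofReal (6 * C) * segmentMean (fun y => ‖φ y‖ₑ) a x) ^ p := by
          gcongr
          refine (enorm_solenoidalCutoff_sub_smul_le hR (hDχ x) ?_ k φ).trans ?_
          · linarith [norm_sub_le x a]
          · gcongr
            exact enorm_radialMean_le_segmentMean k φ a x
      _ ≤ ENNReal.ofReal (6 * C) ^ p * (2 ^ p * segmentMean
            (tailDensity (ENNReal.ofReal (4 * M / R)) M p fun y => ‖φ y‖ₑ) a x) := by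
          rw [ENNReal.mul_rpow_of_nonneg _ _ hp0]
          gcongr
          exact segmentMean_rpow_le hφ.measurable.enorm hp hsegment
      _ = _ := by
          rw [← mul_assoc, ← ENNReal.mul_rpow_of_nonneg _ _ hp0, ← ENNReal.ofReal_ofNat 2,
            ← ENNReal.ofReal_mul' zero_le_two]
          ring_nf
  · have hDχ0 : fderiv ℝ χ x = 0 := by
      by_cases hx : x ∈ ball 0 R
      · exact hχ.fderiv_eq_zero_of_mem_ball hx
      · exact hχ.fderiv_eq_zero_of_notMem_closedBall fun h => hshell ⟨h, hx⟩
    rw [solenoidalCutoff_eq_smul_of_fderiv_eq_zero hDχ0, sub_self, enorm_zero,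
      ENNReal.zero_rpow_of_pos (by linarith)]
    exact zero_le

variable [FiniteDimensional ℝ E] {μ : Measure E} [μ.IsAddHaarMeasure]

/-- The centre `a` serves all exponents at once: it is chosen by averaging for the sum of the
densities. -/
lemma exists_lintegral_solenoidalCutoff_sub_smul_le (hC : 1 ≤ C) (hχ : IsCutoff χ 0 R)
    (hR : 0 < R) (hDχ : ∀ x, ‖fderiv ℝ χ x‖ ≤ C / R) (hφ : Continuous φ) (k : ℕ) (M : ℝ)
    {P : Finset ℝ} (hP : ∀ p ∈ P, p ∈ Icc 1 s) :
    ∃ a, ∀ p ∈ P, ∫⁻ x, ‖solenoidalCutoff k χ φ a x - χ x • φ x‖ₑ ^ p ∂μ ≤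
      ENNReal.ofReal (12 * C) ^ s * (8 ^ Module.finrank ℝ E * ∑ q ∈ P, ∫⁻ y in closedBall 0 (2 * R),
        tailDensity (ENNReal.ofReal (4 * M / R)) M q (fun y => ‖φ y‖ₑ) y ∂μ) := by
  set B : Set E := closedBall 0 (2 * R)
  set τ : ℝ → E → ℝ≥0∞ := fun q => tailDensity (ENNReal.ofReal (4 * M / R)) M q fun y => ‖φ y‖ₑ
  have hτ (q : ℝ) : Measurable (τ q) := measurable_tailDensity hφ.measurable.enorm _ _ _
  set g : E → ℝ≥0∞ := B.indicator fun y => ∑ q ∈ P, τ q y with hg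
  have hgm : Measurable g :=
    (Finset.measurable_fun_sum P fun q _ => hτ q).indicator measurableSet_closedBall
  obtain ⟨a, ha, hga⟩ := exists_lintegral_segmentMean_le (μ := μ) hgm 0 hR
  have haB : a ∈ B := closedBall_subset_closedBall (by linarith) ha
  refine ⟨a, fun p hp => ?_⟩
  obtain ⟨hp1, hps⟩ := hP p hp
  have hCs : ENNReal.ofReal (12 * C) ^ p ≤ ENNReal.ofReal (12 * C) ^ s :=
    ENNReal.rpow_le_rpow_of_exponent_le (ENNReal.one_le_ofReal.2 (by linarith)) hps
  have hmean {x : E} (hx : x ∈ B) : segmentMean (τ p) a x ≤ segmentMean g a x := by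
    rw [hg, segmentMean_indicator (convex_closedBall 0 _) haB hx]
    exact segmentMean_mono (fun y => Finset.single_le_sum (f := (τ · y)) (by simp) hp) a x
  calc ∫⁻ x, ‖solenoidalCutoff k χ φ a x - χ x • φ x‖ₑ ^ p ∂μ
      ≤ ∫⁻ x in B, ENNReal.ofReal (12 * C) ^ p * segmentMean (τ p) a x ∂μ := by
        rw [← lintegral_indicator measurableSet_closedBall]
        exact lintegral_mono
          (enorm_solenoidalCutoff_sub_smul_rpow_le hχ hR hDχ hφ ha k M hp1)
    _ ≤ ∫⁻ x in B, ENNReal.ofReal (12 * C) ^ s * segmentMean g a x ∂μ :=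
        setLIntegral_mono' measurableSet_closedBall fun x hx => mul_le_mul' hCs (hmean hx)
    _ ≤ ENNReal.ofReal (12 * C) ^ s * (8 ^ Module.finrank ℝ E * ∫⁻ y, g y ∂μ) := by
        rw [lintegral_const_mul' _ _ (ENNReal.rpow_ne_top_of_nonneg (by linarith)
          ENNReal.ofReal_ne_top)]
        gcongr
    _ = _ := by
        rw [hg, lintegral_indicator measurableSet_closedBall,
          lintegral_finsetSum P fun q _ => hτ q]

end CutoffError

section ApproximationError

variable {E : Type*} [NormedAddCommGroup E] [NormedSpace ℝ E] [MeasurableSpace E]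
  [BorelSpace E] {μ : Measure E} {χ : E → ℝ} {v φ : E → E}
  {δ : ℝ≥0∞} {C M R p s : ℝ}

lemma lintegral_sub_smul_rpow_le (hχ : IsCutoff χ 0 R) (hMR : M ≤ R) (hp : p ∈ Icc 1 s)
    (hv : AEStronglyMeasurable v μ) (hφ : AEStronglyMeasurable φ μ) :
    ∫⁻ x, ‖v x - χ x • φ x‖ₑ ^ p ∂μ ≤
      2 ^ s * (∫⁻ x, tailDensity δ M p (fun x => ‖v x‖ₑ) x ∂μ +
        ∫⁻ x in closedBall 0 (2 * R), ‖v x - φ x‖ₑ ^ p ∂μ) := by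
  have hp0 : 0 < p := by linarith [hp.1]
  set B : Set E := closedBall 0 (2 * R)
  have hfar (x : E) :
      ‖(1 - χ x) • v x‖ₑ ^ p ≤ tailDensity δ M p (fun x => ‖v x‖ₑ) x := by
    by_cases hx : x ∈ ball 0 M
    · rw [hχ.eq_one x (ball_subset_closedBall (ball_subset_ball hMR hx)), sub_self, zero_smul,
        enorm_zero, ENNReal.zero_rpow_of_pos hp0]
      exact zero_le
    · exact (ENNReal.rpow_le_rpow (hχ.enorm_one_sub_smul_le x (v x)) hp0.le).trans
        (rpow_le_tailDensity hx)
  have hnear (x : E) :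
      ‖χ x • (v x - φ x)‖ₑ ^ p ≤ B.indicator (fun x => ‖v x - φ x‖ₑ ^ p) x := by
    by_cases hx : x ∈ B
    · rw [indicator_of_mem hx]
      exact ENNReal.rpow_le_rpow (hχ.enorm_smul_le x _) hp0.le
    · rw [hχ.eq_zero x fun h => hx (ball_subset_closedBall h), zero_smul, enorm_zero,
        ENNReal.zero_rpow_of_pos hp0]
      exact zero_le
  have hsplit (x : E) : v x - χ x • φ x = (1 - χ x) • v x + χ x • (v x - φ x) := by module
  have hdiff : AEMeasurable (fun x => ‖v x - φ x‖ₑ ^ p) μ := (hv.sub hφ).enorm.pow_const p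
  rw [← lintegral_indicator measurableSet_closedBall,
    ← lintegral_add_right' _ (hdiff.indicator measurableSet_closedBall),
    ← lintegral_const_mul' _ _ (ENNReal.rpow_ne_top_of_nonneg (hp0.le.trans hp.2)
      ENNReal.ofNat_ne_top)]
  refine lintegral_mono fun x => ?_
  calc ‖v x - χ x • φ x‖ₑ ^ p ≤ (‖(1 - χ x) • v x‖ₑ + ‖χ x • (v x - φ x)‖ₑ) ^ p := by
        rw [hsplit]
        exact ENNReal.rpow_le_rpow (enorm_add_le _ _) hp0.le
    _ ≤ 2 ^ s * (‖(1 - χ x) • v x‖ₑ ^ p + ‖χ x • (v x - φ x)‖ₑ ^ p) :=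
        add_rpow_le_two_rpow_mul hp.1 hp.2 _ _
    _ ≤ _ := by
        gcongr
        · exact hfar x
        · exact hnear x

variable [FiniteDimensional ℝ E] [μ.IsAddHaarMeasure]

lemma exists_lintegral_sub_solenoidalCutoff_le (hC : 1 ≤ C) (hχ : IsCutoff χ 0 R) (hR : 0 < R)
    (hMR : 4 * M ≤ R) (hDχ : ∀ x, ‖fderiv ℝ χ x‖ ≤ C / R) (hv : AEStronglyMeasurable v μ)
    (hφ : Continuous φ) (k : ℕ) {P : Finset ℝ} (hP : ∀ p ∈ P, p ∈ Icc 1 s) :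
    ∃ a, ∀ p ∈ P, ∫⁻ x, ‖v x - solenoidalCutoff k χ φ a x‖ₑ ^ p ∂μ ≤
      2 ^ s * (2 ^ s + ENNReal.ofReal (12 * C) ^ s * 8 ^ Module.finrank ℝ E * (2 ^ s * 2)) *
        ∑ q ∈ P,
          (∫⁻ x, tailDensity (ENNReal.ofReal (4 * M / R)) M q (fun x => ‖v x‖ₑ) x ∂μ +
            ∫⁻ x in closedBall 0 (2 * R), ‖v x - φ x‖ₑ ^ q ∂μ) := by
  have hMR' : M ≤ R := by linarith
  set δ : ℝ≥0∞ := ENNReal.ofReal (4 * M / R)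
  set B : Set E := closedBall 0 (2 * R)
  set X : ℝ → ℝ≥0∞ := fun q => ∫⁻ x, tailDensity δ M q (fun x => ‖v x‖ₑ) x ∂μ +
    ∫⁻ x in B, ‖v x - φ x‖ₑ ^ q ∂μ
  have hδ : δ ≤ 1 := ENNReal.ofReal_le_one.2 ((div_le_one hR).2 hMR)
  have hφm : AEStronglyMeasurable φ μ := hφ.aestronglyMeasurable
  obtain ⟨a, ha⟩ := exists_lintegral_solenoidalCutoff_sub_smul_le (μ := μ) hC hχ hR hDχ hφ k M hP
  have htriangle (x : E) : ‖φ x‖ₑ ≤ ‖v x‖ₑ + ‖v x - φ x‖ₑ := by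
    simpa using enorm_sub_le (a := v x) (b := v x - φ x)
  have hcorrection : ∑ q ∈ P, ∫⁻ x in B, tailDensity δ M q (fun x => ‖φ x‖ₑ) x ∂μ ≤
      2 ^ s * 2 * ∑ q ∈ P, X q := by
    rw [Finset.mul_sum]
    refine Finset.sum_le_sum fun q hq => (lintegral_tailDensity_le_add hδ (hP q hq).1 (hP q hq).2
      (hv.sub hφm).enorm.restrict htriangle).trans ?_
    exact mul_le_mul' le_rfl (add_le_add (setLIntegral_le_lintegral _ _) le_rfl)
  refine ⟨a, fun p hp => ?_⟩
  obtain ⟨hp1, hps⟩ := hP p hp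
  have hcutoff : ∫⁻ x, ‖v x - χ x • φ x‖ₑ ^ p ∂μ ≤ 2 ^ s * ∑ q ∈ P, X q := by
    refine (lintegral_sub_smul_rpow_le (δ := δ) hχ hMR' (hP p hp) hv hφm).trans ?_
    gcongr
    exact Finset.single_le_sum (f := X) (by simp) hp
  have hdiff : AEMeasurable (fun x => ‖v x - χ x • φ x‖ₑ ^ p) μ :=
    (hv.sub (hχ.contDiff.continuous.smul hφ).aestronglyMeasurable).enorm.pow_const p
  calc ∫⁻ x, ‖v x - solenoidalCutoff k χ φ a x‖ₑ ^ p ∂μ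
      ≤ ∫⁻ x, 2 ^ s * (‖v x - χ x • φ x‖ₑ ^ p +
          ‖solenoidalCutoff k χ φ a x - χ x • φ x‖ₑ ^ p) ∂μ := by
        refine lintegral_mono fun x => le_trans ?_ (add_rpow_le_two_rpow_mul hp1 hps _ _)
        gcongr
        simpa using enorm_sub_le (a := v x - χ x • φ x)
          (b := solenoidalCutoff k χ φ a x - χ x • φ x)
    _ = 2 ^ s * (∫⁻ x, ‖v x - χ x • φ x‖ₑ ^ p ∂μ +
          ∫⁻ x, ‖solenoidalCutoff k χ φ a x - χ x • φ x‖ₑ ^ p ∂μ) := by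
        rw [lintegral_const_mul' _ _ (ENNReal.rpow_ne_top_of_nonneg (by linarith)
          ENNReal.ofNat_ne_top), lintegral_add_left' hdiff]
    _ ≤ 2 ^ s * (2 ^ s * ∑ q ∈ P, X q + ENNReal.ofReal (12 * C) ^ s *
          (8 ^ Module.finrank ℝ E * (2 ^ s * 2 * ∑ q ∈ P, X q))) := by
        gcongr
        exact (ha p hp).trans (by gcongr)
    _ = _ := by ring

end ApproximationError

section VanishingErrors

open Filter

variable {α : Type*} [MeasurableSpace α] {μ : Measure α} {s : ℝ}

lemma exists_forall_sum_lintegral_rpow_le [IsFiniteMeasure μ] {P : Finset ℝ}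
    (hP : ∀ p ∈ P, p ∈ Ioc 0 s) {ε : ℝ≥0∞} (hε : 0 < ε) :
    ∃ η > 0, ∀ f : α → ℝ≥0∞, AEMeasurable f μ → ∫⁻ x, f x ^ s ∂μ ≤ η →
      ∑ p ∈ P, ∫⁻ x, f x ^ p ∂μ ≤ ε := by
  have hlim : Tendsto (fun y : ℝ≥0∞ => ∑ p ∈ P, y ^ (p / s) * μ univ ^ (1 - p / s)) (𝓝 0)
      (𝓝 0) := by
    rw [← Finset.sum_const_zero (s := P)]
    refine tendsto_finsetSum P fun p hp => ?_
    have hps : 0 < p / s := div_pos (hP p hp).1 ((hP p hp).1.trans_le (hP p hp).2)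
    have hpow := (ENNReal.continuous_rpow_const (y := p / s)).tendsto 0
    rw [ENNReal.zero_rpow_of_pos hps] at hpow
    simpa using ENNReal.Tendsto.mul_const hpow (.inr (ENNReal.rpow_ne_top_of_nonneg
      (sub_nonneg.2 (div_le_one_of_le₀ (hP p hp).2 ((hP p hp).1.le.trans (hP p hp).2)))
      (measure_ne_top μ univ)))
  obtain ⟨η, hη, hsub⟩ := ENNReal.nhds_zero_basis_Iic.mem_iff.1 (hlim.eventually_le_const hε)
  refine ⟨η, hη, fun f hf hfη => le_trans ?_ (hsub hfη)⟩
  exact Finset.sum_le_sum fun p hp => lintegral_rpow_le_of_le hf (hP p hp).1 (hP p hp).2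

variable {E : Type*} [NormedAddCommGroup E] [MeasurableSpace E] [BorelSpace E] {μ : Measure E}
  {f : E → ℝ≥0∞} {q : ℝ}

lemma tendsto_setLIntegral_compl_ball (hf : AEMeasurable f μ) (hfin : ∫⁻ y, f y ∂μ ≠ ∞) :
    Tendsto (fun M => ∫⁻ y in (ball 0 M)ᶜ, f y ∂μ) atTop (𝓝 0) := by
  simp_rw [← lintegral_indicator (measurableSet_ball.compl : MeasurableSet (ball (0 : E) _)ᶜ)]
  rw [← lintegral_zero (μ := μ)]
  refine tendsto_lintegral_filter_of_dominated_convergence' f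
    (.of_forall fun M => hf.indicator measurableSet_ball.compl)
    (.of_forall fun M => .of_forall fun y => indicator_le_self _ f y) hfin
    (.of_forall fun y => tendsto_const_nhds.congr' ?_)
  filter_upwards [eventually_gt_atTop ‖y‖] with M hM
  rw [indicator_of_notMem (by simpa using hM)]

lemma tendsto_lintegral_tailDensity (hf : AEMeasurable f μ) (hq : 1 < q)
    (hfin : ∫⁻ y, f y ^ q ∂μ ≠ ∞) :
    Tendsto (fun M : ℝ => ∫⁻ y, tailDensity (ENNReal.ofReal (4 * M / M ^ 2)) M q f y ∂μ) atTop
      (𝓝 0) := by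
  simp_rw [lintegral_tailDensity hf]
  have hratio : Tendsto (fun M : ℝ => ENNReal.ofReal (4 * M / M ^ 2)) atTop (𝓝 0) := by
    rw [← ENNReal.ofReal_zero]
    refine ENNReal.tendsto_ofReal (((tendsto_const_nhds (x := (4 : ℝ))).div_atTop
      tendsto_id).congr fun M => ?_)
    rw [mul_div_assoc, sq, div_self_mul_self', id, div_eq_mul_inv]
  have hpow := ((ENNReal.continuous_rpow_const (y := q - 1)).tendsto 0).comp hratio
  rw [ENNReal.zero_rpow_of_pos (by linarith)] at hpow
  simpa using (ENNReal.Tendsto.mul_const hpow (.inr hfin)).add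
    (tendsto_setLIntegral_compl_ball (hf.pow_const q) hfin)

end VanishingErrors

section TestFields

variable {k : ℕ} {Ω : Set (Fin (k + 2) → ℝ)} {χ : (Fin (k + 2) → ℝ) → ℝ}
  {v φ : (Fin (k + 2) → ℝ) → Fin (k + 2) → ℝ} {a c : Fin (k + 2) → ℝ} {R s : ℝ}

lemma isTestIn_solenoidalCutoff (hχ : IsCutoff χ c R) (hφ : ContDiff ℝ (⊤ : ℕ∞) φ)
    (hdiv : ∀ x, divg φ x = 0) (hsub : tsupport (solenoidalCutoff k χ φ a) ⊆ Ω) :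
    IsTestIn Ω (solenoidalCutoff k χ φ a) :=
  ⟨contDiff_solenoidalCutoff hχ.contDiff hφ k a, hχ.hasCompactSupport_solenoidalCutoff k φ a, hsub,
    divg_solenoidalCutoff hχ.contDiff hφ hdiv a⟩

lemma isTestIn_solenoidalCutoff_of_isTestIn (hχ : IsCutoff χ c R) (hΩ : Ωᶜ ⊆ ball c R)
    (hφ : IsTestIn Ω φ) (a : Fin (k + 2) → ℝ) : IsTestIn Ω (solenoidalCutoff k χ φ a) :=
  isTestIn_solenoidalCutoff hχ hφ.1 hφ.2.2.2 <|
    (hχ.tsupport_solenoidalCutoff_subset_union k φ a).trans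
      (union_subset hφ.2.2.1 (compl_subset_comm.1 hΩ))

/-- The radius `M` makes the tails of `v` small; with the cut-off at radius `M ^ 2`, segments from
the centre `a` spend a fraction `4 / M` in the ball of radius `M`. Only then is `φ` chosen. -/
lemma exists_isTestIn_lintegral_sub_rpow_le (hΩ : IsCompact Ωᶜ) (hs : 0 ≤ s) {P : Finset ℝ}
    (hP : ∀ p ∈ P, p ∈ Ioc 1 s) (hv : AEStronglyMeasurable v)
    (hvP : ∀ p ∈ P, ∫⁻ x, ‖v x‖ₑ ^ p ≠ ∞)
    (happrox : ∀ η > 0, ∃ φ, IsTestIn Ω φ ∧ ∫⁻ x, ‖v x - φ x‖ₑ ^ s ≤ η) {δ : ℝ≥0∞} (hδ : 0 < δ) :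
    ∃ ψ, IsTestIn Ω ψ ∧ ∀ p ∈ P, ∫⁻ x, ‖v x - ψ x‖ₑ ^ p ≤ δ := by
  obtain ⟨C, hC, hcutoff⟩ := exists_isCutoff (Fin (k + 2) → ℝ)
  set K : ℝ≥0∞ := 2 ^ s * (2 ^ s + ENNReal.ofReal (12 * C) ^ s *
    8 ^ Module.finrank ℝ (Fin (k + 2) → ℝ) * (2 ^ s * 2))
  have hK : K ≠ ∞ := by finiteness
  have hη : 0 < δ / K / 2 := ENNReal.half_pos (ENNReal.div_pos hδ.ne' hK).ne'
  obtain ⟨ρ, hρ⟩ := hΩ.isBounded.subset_ball 0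
  have htail := tendsto_finsetSum P fun q hq =>
    tendsto_lintegral_tailDensity hv.enorm (hP q hq).1 (hvP q hq)
  rw [Finset.sum_const_zero] at htail
  obtain ⟨M, hMtail, hM4, hMρ⟩ := ((htail.eventually_le_const hη).and
    ((Filter.eventually_ge_atTop 4).and (Filter.eventually_ge_atTop ρ))).exists
  have hMM : 4 * M ≤ M ^ 2 := by nlinarith
  set μ : Measure (Fin (k + 2) → ℝ) := volume.restrict (closedBall 0 (2 * M ^ 2))
  have : IsFiniteMeasure μ := isFiniteMeasure_restrict.2 measure_closedBall_lt_top.ne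
  obtain ⟨η, hη0, hηP⟩ := exists_forall_sum_lintegral_rpow_le (μ := μ)
    (fun p hp => ⟨one_pos.trans (hP p hp).1, (hP p hp).2⟩) hη
  obtain ⟨φ, hφ, hφη⟩ := happrox η hη0
  have hclose := hηP _ (hv.sub hφ.1.continuous.aestronglyMeasurable).enorm.restrict
    ((setLIntegral_le_lintegral _ _).trans hφη)
  obtain ⟨χ, hχ, hDχ⟩ := hcutoff 0 (M ^ 2) (by positivity)
  obtain ⟨a, ha⟩ := exists_lintegral_sub_solenoidalCutoff_le hC hχ (by positivity) hMM hDχ hv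
    hφ.1.continuous k fun p hp => ⟨(hP p hp).1.le, (hP p hp).2⟩
  refine ⟨_, isTestIn_solenoidalCutoff_of_isTestIn hχ
    (hρ.trans (ball_subset_ball (by linarith))) hφ a, fun p hp => (ha p hp).trans ?_⟩
  rw [Finset.sum_add_distrib]
  calc K * _ ≤ K * (δ / K / 2 + δ / K / 2) := mul_le_mul' le_rfl (add_le_add hMtail hclose)
    _ = K * (δ / K) := by rw [ENNReal.add_halves]
    _ ≤ δ := ENNReal.mul_div_le

end TestFields

section LtNorm

variable {n : ℕ} {Ω : Set (Fin n → ℝ)} {t : ℝ} {f : (Fin n → ℝ) → Fin n → ℝ}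

lemma enorm_le_enorm_toLp (w : Fin n → ℝ) : ‖w‖ₑ ≤ ‖WithLp.toLp 2 w‖ₑ := by
  simpa [edist_zero_right] using PiLp.lipschitzWith_ofLp 2 (fun _ : Fin n => ℝ) (WithLp.toLp 2 w) 0

lemma enorm_toLp_le (w : Fin n → ℝ) :
    ‖WithLp.toLp 2 w‖ₑ ≤ ((n : NNReal) ^ (2⁻¹ : ℝ) : NNReal) * ‖w‖ₑ := by
  simpa [edist_zero_right] using PiLp.lipschitzWith_toLp 2 (fun _ : Fin n => ℝ) w 0

lemma ltNorm_eq_integral_norm_toLp (Ω : Set (Fin n → ℝ)) (t : ℝ) (f : (Fin n → ℝ) → Fin n → ℝ) :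
    LtNorm Ω t f = (∫ x in Ω, ‖WithLp.toLp 2 (f x)‖ ^ t) ^ (1 / t) := by
  simp [LtNorm, EuclideanSpace.norm_eq]

lemma ofReal_ltNorm_rpow (ht : 0 < t) (f : (Fin n → ℝ) → Fin n → ℝ) :
    ENNReal.ofReal (LtNorm Ω t f) ^ t =
      ENNReal.ofReal (∫ x in Ω, ‖WithLp.toLp 2 (f x)‖ ^ t) := by
  have hint : 0 ≤ ∫ x in Ω, ‖WithLp.toLp 2 (f x)‖ ^ t := integral_nonneg fun x => by positivity
  rw [ltNorm_eq_integral_norm_toLp, ENNReal.ofReal_rpow_of_nonneg (Real.rpow_nonneg hint _) ht.le,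
    ← Real.rpow_mul hint, one_div_mul_cancel ht.ne', Real.rpow_one]

lemma enorm_norm_rpow {F : Type*} [SeminormedAddCommGroup F] (ht : 0 ≤ t) (w : F) :
    ‖‖w‖ ^ t‖ₑ = ‖w‖ₑ ^ t := by
  rw [Real.enorm_rpow_of_nonneg (norm_nonneg w) ht, enorm_norm]

lemma ofReal_ltNorm_rpow_le (ht : 0 < t) (f : (Fin n → ℝ) → Fin n → ℝ) :
    ENNReal.ofReal (LtNorm Ω t f) ^ t ≤ ∫⁻ x in Ω, ‖WithLp.toLp 2 (f x)‖ₑ ^ t := by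
  rw [ofReal_ltNorm_rpow ht]
  refine ((ENNReal.ofReal_le_ofReal (Real.le_norm_self _)).trans_eq (ofReal_norm _)).trans ?_
  simpa only [enorm_norm_rpow ht.le] using
    enorm_integral_le_lintegral_enorm (μ := volume.restrict Ω) fun x => ‖WithLp.toLp 2 (f x)‖ ^ t

lemma lintegral_enorm_rpow_le_ofReal_ltNorm_rpow (ht : 0 < t)
    (hf : AEStronglyMeasurable f (volume.restrict Ω)) (hfin : ∫⁻ x in Ω, ‖f x‖ₑ ^ t ≠ ∞) :
    ∫⁻ x in Ω, ‖f x‖ₑ ^ t ≤ ENNReal.ofReal (LtNorm Ω t f) ^ t := by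
  have hmeas : AEStronglyMeasurable (fun x => WithLp.toLp 2 (f x)) (volume.restrict Ω) :=
    (PiLp.continuous_toLp 2 _).comp_aestronglyMeasurable hf
  have hint : Integrable (fun x => ‖WithLp.toLp 2 (f x)‖ ^ t) (volume.restrict Ω) := by
    refine ⟨(hmeas.norm.aemeasurable.pow_const t).aestronglyMeasurable, ?_⟩
    simp_rw [HasFiniteIntegral, enorm_norm_rpow ht.le]
    refine (lintegral_mono fun x => ENNReal.rpow_le_rpow (enorm_toLp_le (f x)) ht.le).trans_lt ?_
    simp_rw [ENNReal.mul_rpow_of_nonneg _ _ ht.le]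
    rw [lintegral_const_mul' _ _ (by finiteness)]
    finiteness
  rw [ofReal_ltNorm_rpow ht, ofReal_integral_eq_lintegral_ofReal hint
    (.of_forall fun x => by positivity)]
  refine lintegral_mono fun x => ?_
  rw [← ENNReal.ofReal_rpow_of_nonneg (norm_nonneg _) ht.le, ofReal_norm]
  exact ENNReal.rpow_le_rpow (enorm_le_enorm_toLp (f x)) ht.le

lemma exists_forall_ltNorm_lt_of_lintegral_le (Ω : Set (Fin n → ℝ)) (ht : 0 < t)
    {ε : ℝ} (hε : 0 < ε) :
    ∃ δ > 0, ∀ f, ∫⁻ x in Ω, ‖f x‖ₑ ^ t ≤ δ → LtNorm Ω t f < ε := by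
  set c : NNReal := (n : NNReal) ^ (2⁻¹ : ℝ)
  have hct : (c : ℝ≥0∞) ^ t ≠ ∞ := by finiteness
  have hlim := ENNReal.Tendsto.const_mul (a := (c : ℝ≥0∞) ^ t) (Filter.tendsto_id (x := 𝓝 0))
    (.inr hct)
  rw [mul_zero] at hlim
  have hεt : 0 < ENNReal.ofReal ε ^ t := ENNReal.rpow_pos (by simpa) (by simp)
  obtain ⟨δ, hδ, hsub⟩ := ENNReal.nhds_zero_basis_Iic.mem_iff.1 (hlim.eventually_lt_const hεt)
  refine ⟨δ, hδ, fun f hf => (ENNReal.ofReal_lt_ofReal_iff hε).1 ?_⟩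
  rw [← ENNReal.rpow_lt_rpow_iff ht]
  calc ENNReal.ofReal (LtNorm Ω t f) ^ t ≤ ∫⁻ x in Ω, ‖WithLp.toLp 2 (f x)‖ₑ ^ t :=
        ofReal_ltNorm_rpow_le ht f
    _ ≤ ∫⁻ x in Ω, c ^ t * ‖f x‖ₑ ^ t := by
        refine lintegral_mono fun x => ?_
        rw [← ENNReal.mul_rpow_of_nonneg _ _ ht.le]
        exact ENNReal.rpow_le_rpow (enorm_toLp_le (f x)) ht.le
    _ = c ^ t * ∫⁻ x in Ω, ‖f x‖ₑ ^ t := lintegral_const_mul' _ _ hct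
    _ < ENNReal.ofReal ε ^ t := hsub hf

lemma exists_forall_lintegral_le_of_ltNorm_lt (Ω : Set (Fin n → ℝ)) (ht : 0 < t)
    {δ : ℝ≥0∞} (hδ : 0 < δ) :
    ∃ ε > 0, ∀ f : (Fin n → ℝ) → Fin n → ℝ, AEStronglyMeasurable f (volume.restrict Ω) →
      ∫⁻ x in Ω, ‖f x‖ₑ ^ t ≠ ∞ → LtNorm Ω t f < ε → ∫⁻ x in Ω, ‖f x‖ₑ ^ t ≤ δ := by
  obtain ⟨ε, hε, hεδ⟩ := ENNReal.lt_iff_exists_nnreal_btwn.1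
    (ENNReal.rpow_pos_of_nonneg hδ (inv_nonneg.2 ht.le))
  refine ⟨ε, by exact_mod_cast hε, fun f hf hfin hlt => ?_⟩
  refine (lintegral_enorm_rpow_le_ofReal_ltNorm_rpow ht hf hfin).trans ?_
  rw [← ENNReal.le_rpow_inv_iff ht]
  exact (ENNReal.ofReal_le_ofReal hlt.le).trans (by simpa using hεδ.le)

lemma integrable_of_ltNorm_ne_zero (ht : 0 < t) (h : LtNorm Ω t f ≠ 0) :
    Integrable (fun x => ‖WithLp.toLp 2 (f x)‖ ^ t) (volume.restrict Ω) := by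
  contrapose! h
  rw [ltNorm_eq_integral_norm_toLp, integral_undef h, Real.zero_rpow (one_div_pos.2 ht).ne']

lemma lintegral_ne_top_of_ltNorm_ne_zero (ht : 0 < t) (h : LtNorm Ω t f ≠ 0) :
    ∫⁻ x in Ω, ‖f x‖ₑ ^ t ≠ ∞ := by
  have hfin := (integrable_of_ltNorm_ne_zero ht h).hasFiniteIntegral
  simp_rw [HasFiniteIntegral, enorm_norm_rpow ht.le] at hfin
  exact ((lintegral_mono fun x =>
    ENNReal.rpow_le_rpow (enorm_le_enorm_toLp (f x)) ht.le).trans_lt hfin).ne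

lemma aemeasurable_norm_of_ltNorm_ne_zero (ht : 0 < t) (h : LtNorm Ω t f ≠ 0) :
    AEMeasurable (fun x => ‖WithLp.toLp 2 (f x)‖) (volume.restrict Ω) := by
  have hpow := (integrable_of_ltNorm_ne_zero ht h).aemeasurable.pow_const (1 / t)
  simpa only [← Real.rpow_mul (norm_nonneg _), mul_one_div_cancel ht.ne', Real.rpow_one] using hpow

end LtNorm

section Perturbation

lemma lintegral_enorm_sub_rpow_ne_top {α F : Type*} [MeasurableSpace α] {μ : Measure α}
    [NormedAddCommGroup F] {f g : α → F} {t : ℝ} (ht : 1 ≤ t) (hg : AEStronglyMeasurable g μ)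
    (hft : ∫⁻ x, ‖f x‖ₑ ^ t ∂μ ≠ ∞) (hgt : ∫⁻ x, ‖g x‖ₑ ^ t ∂μ ≠ ∞) :
    ∫⁻ x, ‖f x - g x‖ₑ ^ t ∂μ ≠ ∞ := by
  have hbound (x : α) : ‖f x - g x‖ₑ ^ t ≤ 2 ^ t * (‖f x‖ₑ ^ t + ‖g x‖ₑ ^ t) :=
    (ENNReal.rpow_le_rpow enorm_sub_le (by linarith)).trans
      (add_rpow_le_two_rpow_mul ht le_rfl _ _)
  refine ((lintegral_mono hbound).trans_lt ?_).ne
  rw [lintegral_const_mul' _ _ (by finiteness), lintegral_add_right' _ (hg.enorm.pow_const t)]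
  finiteness

variable {n : ℕ} {Ω : Set (Fin n → ℝ)} {v φ : (Fin n → ℝ) → Fin n → ℝ} {t : ℝ}

lemma IsTestIn.lintegral_rpow_ne_top (hφ : IsTestIn Ω φ) (ht : 0 < t) (S : Set (Fin n → ℝ)) :
    ∫⁻ x in S, ‖φ x‖ₑ ^ t ≠ ∞ := by
  have hmem : MemLp φ (ENNReal.ofReal t) (volume.restrict S) :=
    (hφ.1.continuous.memLp_of_hasCompactSupport hφ.2.1).restrict S
  simpa [ENNReal.toReal_ofReal ht.le] using
    (lintegral_rpow_enorm_lt_top_of_eLpNorm_lt_top (by simpa) ENNReal.ofReal_ne_top hmem.2).ne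

lemma IsTestIn.lintegral_sub_rpow_ne_top_iff (hφ : IsTestIn Ω φ) (ht : 1 ≤ t) :
    ∫⁻ x in Ω, ‖v x - φ x‖ₑ ^ t ≠ ∞ ↔ ∫⁻ x in Ω, ‖v x‖ₑ ^ t ≠ ∞ := by
  have hφm : AEStronglyMeasurable φ (volume.restrict Ω) := hφ.1.continuous.aestronglyMeasurable
  have hφt := hφ.lintegral_rpow_ne_top (one_pos.trans_le ht) Ω
  refine ⟨fun h => ?_, fun h => lintegral_enorm_sub_rpow_ne_top ht hφm h hφt⟩
  simpa using lintegral_enorm_sub_rpow_ne_top ht hφm.neg h (by simpa using hφt)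

lemma lintegral_indicator_sub_rpow (hΩ : MeasurableSet Ω) (hφ : tsupport φ ⊆ Ω) (ht : 0 < t) :
    ∫⁻ x, ‖Ω.indicator v x - φ x‖ₑ ^ t = ∫⁻ x in Ω, ‖v x - φ x‖ₑ ^ t := by
  rw [← lintegral_indicator hΩ]
  refine lintegral_congr fun x => ?_
  by_cases hx : x ∈ Ω
  · simp only [indicator_of_mem hx]
  · simp only [indicator_of_notMem hx, image_eq_zero_of_notMem_tsupport fun h => hx (hφ h),
      sub_zero, enorm_zero, ENNReal.zero_rpow_of_pos ht]

lemma IsTestIn.ltNorm_sub_eq_zero (hφ : IsTestIn Ω φ) (ht : 1 ≤ t)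
    (hv : ∫⁻ x in Ω, ‖v x‖ₑ ^ t = ∞) :
    LtNorm Ω t (fun x i => v x i - φ x i) = 0 := by
  contrapose! hv
  exact (hφ.lintegral_sub_rpow_ne_top_iff ht).1
    (lintegral_ne_top_of_ltNorm_ne_zero (one_pos.trans_le ht) hv)

lemma exists_isTestIn_lintegral_le_of_ltNorm_lt (ht : 1 ≤ t)
    (hv : AEStronglyMeasurable v (volume.restrict Ω)) (hvt : ∫⁻ x in Ω, ‖v x‖ₑ ^ t ≠ ∞)
    (happrox : ∀ ε > 0, ∃ φ, IsTestIn Ω φ ∧ LtNorm Ω t (fun x i => v x i - φ x i) < ε)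
    {δ : ℝ≥0∞} (hδ : 0 < δ) :
    ∃ φ, IsTestIn Ω φ ∧ ∫⁻ x in Ω, ‖v x - φ x‖ₑ ^ t ≤ δ := by
  obtain ⟨ε, hε, hle⟩ := exists_forall_lintegral_le_of_ltNorm_lt Ω (one_pos.trans_le ht) hδ
  obtain ⟨φ, hφ, hlt⟩ := happrox ε hε
  exact ⟨φ, hφ, hle _ (hv.sub hφ.1.continuous.aestronglyMeasurable)
    ((hφ.lintegral_sub_rpow_ne_top_iff ht).2 hvt) hlt⟩

end Perturbation

section Measurability

lemma aemeasurable_restrict_of_forall_mem_nhds {X β : Type*} [TopologicalSpace X]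
    [SecondCountableTopology X] [MeasurableSpace X] [MeasurableSpace β] {μ : Measure X} {S : Set X}
    {f : X → β} (h : ∀ x ∈ S, ∃ U ∈ 𝓝 x, AEMeasurable f (μ.restrict U)) :
    AEMeasurable f (μ.restrict S) := by
  choose! U hU hf using h
  obtain ⟨T, hTS, hT, hcover⟩ := TopologicalSpace.countable_cover_nhdsWithin fun x hx =>
    mem_nhdsWithin_of_mem_nhds (hU x hx)
  refine AEMeasurable.mono_measure ?_ (Measure.restrict_mono hcover le_rfl)
  have : Countable T := hT.to_subtype
  rw [biUnion_eq_iUnion]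
  exact aemeasurable_iUnion_iff.2 fun x => hf x (hTS x.2)

lemma apply_eq_norm_toLp_sq_sub_norm_toLp_sub_single_sq {ι : Type*} [Fintype ι] [DecidableEq ι]
    (w : ι → ℝ) (i : ι) :
    w i = (‖WithLp.toLp 2 w‖ ^ 2 - ‖WithLp.toLp 2 (w - Pi.single i 1)‖ ^ 2 + 1) / 2 := by
  rw [WithLp.toLp_sub, norm_sub_sq_real, PiLp.toLp_single, EuclideanSpace.inner_single_right]
  simp only [one_mul, conj_trivial, PiLp.norm_single, norm_one, one_pow]
  ring

variable {k : ℕ} {Ω : Set (Fin (k + 2) → ℝ)}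

lemma exists_isTestIn_eqOn_ball_const (hΩ : IsOpen Ω) {c : Fin (k + 2) → ℝ} (hc : c ∈ Ω)
    (e : Fin (k + 2) → ℝ) :
    ∃ ψ, IsTestIn Ω ψ ∧ ∃ R > 0, ball c R ⊆ Ω ∧ EqOn ψ (fun _ => e) (ball c R) := by
  obtain ⟨ρ, hρ, hsub⟩ := Metric.nhds_basis_closedBall.mem_iff.1 (hΩ.mem_nhds hc)
  obtain ⟨C, -, hcutoff⟩ := exists_isCutoff (Fin (k + 2) → ℝ)
  obtain ⟨χ, hχ, -⟩ := hcutoff c (ρ / 2) (half_pos hρ)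
  rw [← mul_div_cancel₀ ρ (two_ne_zero' ℝ)] at hsub
  refine ⟨solenoidalCutoff k χ (fun _ => e) c, isTestIn_solenoidalCutoff hχ contDiff_const
    (fun x => by simp [divg, Dmat]) ((hχ.tsupport_solenoidalCutoff_subset_closedBall _ _ _).trans
    hsub), ρ / 2, half_pos hρ, ?_, fun x hx => hχ.solenoidalCutoff_eq_of_mem_ball hx _ _ _⟩
  exact (ball_subset_closedBall.trans (closedBall_subset_closedBall (by linarith))).trans hsub

/-- Test fields that are locally constant unit vectors recover each coordinate of `v` from
Euclidean distances, by polarization. -/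
lemma aestronglyMeasurable_of_forall_isTestIn (hΩ : IsOpen Ω)
    {v : (Fin (k + 2) → ℝ) → Fin (k + 2) → ℝ}
    (h : ∀ φ, IsTestIn Ω φ →
      AEMeasurable (fun x => ‖WithLp.toLp 2 (v x - φ x)‖) (volume.restrict Ω)) :
    AEStronglyMeasurable v (volume.restrict Ω) := by
  have hv : AEMeasurable (fun x => ‖WithLp.toLp 2 (v x)‖) (volume.restrict Ω) := by
    simpa using h 0 ⟨contDiff_const, HasCompactSupport.zero, by simp [tsupport],
      fun x => by simp [divg, Dmat]⟩
  refine (aemeasurable_pi_iff.2 fun i => aemeasurable_restrict_of_forall_mem_nhds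
    fun c hc => ?_).aestronglyMeasurable
  obtain ⟨ψ, hψ, R, hR, hRΩ, hψe⟩ := exists_isTestIn_eqOn_ball_const hΩ hc (Pi.single i 1)
  refine ⟨ball c R, ball_mem_nhds c hR, ?_⟩
  have hpolar : AEMeasurable (fun x => (‖WithLp.toLp 2 (v x)‖ ^ 2 -
      ‖WithLp.toLp 2 (v x - ψ x)‖ ^ 2 + 1) / 2) (volume.restrict (ball c R)) :=
    ((((hv.pow_const 2).sub ((h ψ hψ).pow_const 2)).add_const 1).div_const 2).mono_measure
      (Measure.restrict_mono hRΩ le_rfl)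
  refine hpolar.congr ((ae_restrict_iff' measurableSet_ball).2 (.of_forall fun x hx => ?_))
  beta_reduce
  rw [hψe hx, ← apply_eq_norm_toLp_sq_sub_norm_toLp_sub_single_sq]

end Measurability

section Density

variable {k : ℕ} {Ω : Set (Fin (k + 2) → ℝ)} {v : (Fin (k + 2) → ℝ) → Fin (k + 2) → ℝ}

lemma exists_isTestIn_ltNorm_sub_eq_zero (hΩ : IsOpen Ω)
    (hv : ¬ AEStronglyMeasurable v (volume.restrict Ω)) :
    ∃ φ, IsTestIn Ω φ ∧ ∀ t, 0 < t → LtNorm Ω t (fun x i => v x i - φ x i) = 0 := by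
  contrapose! hv
  refine aestronglyMeasurable_of_forall_isTestIn hΩ fun φ hφ => ?_
  obtain ⟨t, ht, hne⟩ := hv φ hφ
  exact aemeasurable_norm_of_ltNorm_ne_zero ht hne

lemma exists_isTestIn_ltNorm_sub_lt (hΩ : IsCompact Ωᶜ) {r s : ℝ} (hr : 1 < r) (hrs : r ≤ s)
    (hv : AEStronglyMeasurable v (volume.restrict Ω)) (hvr : ∫⁻ x in Ω, ‖v x‖ₑ ^ r ≠ ∞)
    (hvs : ∫⁻ x in Ω, ‖v x‖ₑ ^ s ≠ ∞)
    (happrox : ∀ ε > 0, ∃ φ, IsTestIn Ω φ ∧ LtNorm Ω s (fun x i => v x i - φ x i) < ε)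
    {ε : ℝ} (hε : 0 < ε) :
    ∃ φ, IsTestIn Ω φ ∧ LtNorm Ω r (fun x i => v x i - φ x i) < ε ∧
      LtNorm Ω s (fun x i => v x i - φ x i) < ε := by
  have hr0 : 0 < r := one_pos.trans hr
  have hs0 : 0 < s := hr0.trans_le hrs
  have hmeas : MeasurableSet Ω := hΩ.measurableSet.of_compl
  have hindicator {t : ℝ} (ht : 0 < t) :
      ∫⁻ x, ‖Ω.indicator v x‖ₑ ^ t = ∫⁻ x in Ω, ‖v x‖ₑ ^ t := by
    simpa using lintegral_indicator_sub_rpow (φ := 0) hmeas (by simp [tsupport]) ht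
  obtain ⟨δr, hδr, hLr⟩ := exists_forall_ltNorm_lt_of_lintegral_le Ω hr0 hε
  obtain ⟨δs, hδs, hLs⟩ := exists_forall_ltNorm_lt_of_lintegral_le Ω hs0 hε
  obtain ⟨ψ, hψ, hle⟩ := exists_isTestIn_lintegral_sub_rpow_le (P := {r, s}) hΩ hs0.le
    (by simp [hr, hrs, hr.trans_le hrs]) ((aestronglyMeasurable_indicator_iff hmeas).2 hv)
    (by simpa [hindicator hr0, hindicator hs0] using ⟨hvr, hvs⟩)
    (fun η hη => by
      obtain ⟨φ, hφ, hφη⟩ :=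
        exists_isTestIn_lintegral_le_of_ltNorm_lt (hr.le.trans hrs) hv hvs happrox hη
      exact ⟨φ, hφ, (lintegral_indicator_sub_rpow hmeas hφ.2.2.1 hs0).trans_le hφη⟩)
    (lt_min hδr hδs)
  simp only [Finset.mem_insert, Finset.mem_singleton, forall_eq_or_imp, forall_eq, le_min_iff,
    lintegral_indicator_sub_rpow hmeas hψ.2.2.1 hr0,
    lintegral_indicator_sub_rpow hmeas hψ.2.2.1 hs0] at hle
  exact ⟨ψ, hψ, hLr _ hle.1.1, hLs _ hle.2.2⟩

end Density

theorem stmt7_general {n : ℕ} (hn : 2 ≤ n) {Ω : Set (Fin n → ℝ)} (hΩ : IsCompact Ωᶜ)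
    {r s : ℝ} (hr : 1 < r) (hrs : r ≤ s) {v : (Fin n → ℝ) → Fin n → ℝ}
    (hvr : ∀ ε > 0, ∃ φ, IsTestIn Ω φ ∧ LtNorm Ω r (fun x i => v x i - φ x i) < ε)
    (hvs : ∀ ε > 0, ∃ φ, IsTestIn Ω φ ∧ LtNorm Ω s (fun x i => v x i - φ x i) < ε)
    {ε : ℝ} (hε : 0 < ε) :
    ∃ φ, IsTestIn Ω φ ∧ LtNorm Ω r (fun x i => v x i - φ x i) < ε ∧
      LtNorm Ω s (fun x i => v x i - φ x i) < ε := by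
  obtain ⟨k, rfl⟩ := Nat.exists_eq_add_of_le' hn
  have hs : 1 < s := hr.trans_le hrs
  -- `LtNorm` is `0` on fields that are not measurable or not in `L^t`, whence three junk cases.
  by_cases hv : AEStronglyMeasurable v (volume.restrict Ω)
  swap
  · obtain ⟨φ, hφ, hzero⟩ :=
      exists_isTestIn_ltNorm_sub_eq_zero (isClosed_compl_iff.1 hΩ.isClosed) hv
    exact ⟨φ, hφ, (hzero r (by linarith)).trans_lt hε, (hzero s (by linarith)).trans_lt hε⟩
  by_cases hr_top : ∫⁻ x in Ω, ‖v x‖ₑ ^ r = ∞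
  · obtain ⟨φ, hφ, hlt⟩ := hvs ε hε
    exact ⟨φ, hφ, (hφ.ltNorm_sub_eq_zero hr.le hr_top).trans_lt hε, hlt⟩
  by_cases hs_top : ∫⁻ x in Ω, ‖v x‖ₑ ^ s = ∞
  · obtain ⟨φ, hφ, hlt⟩ := hvr ε hε
    exact ⟨φ, hφ, hlt, (hφ.ltNorm_sub_eq_zero hs.le hs_top).trans_lt hε⟩
  exact exists_isTestIn_ltNorm_sub_lt hΩ hr hrs hv hr_top hs_top hvs hε

/-- Density of `𝒞₀(Ω)` in `J^r(Ω) ∩ J^s(Ω)` for an exterior domain `Ω ⊆ ℝⁿ`, `n ≥ 3`,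
`1 < r < s < ∞`: any `v` approximable in `L^r` by test fields and approximable in `L^s`
by test fields is simultaneously approximable in both norms by a single test field. -/
theorem stmt7 (n : ℕ) (hn : 3 ≤ n) (Ω : Set (Fin n → ℝ)) (hΩo : IsOpen Ω)
    (hΩext : IsCompact Ωᶜ) (hΩconn : IsConnected Ω)
    (r s : ℝ) (hr : 1 < r) (hrs : r < s)
    (v : (Fin n → ℝ) → Fin n → ℝ)
    (hvr : ∀ ε : ℝ, 0 < ε → ∃ φ, IsTestIn Ω φ ∧ LtNorm Ω r (fun x i => v x i - φ x i) < ε)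
    (hvs : ∀ ε : ℝ, 0 < ε → ∃ φ, IsTestIn Ω φ ∧ LtNorm Ω s (fun x i => v x i - φ x i) < ε) :
    ∀ ε : ℝ, 0 < ε → ∃ φ, IsTestIn Ω φ ∧
      LtNorm Ω r (fun x i => v x i - φ x i) < ε ∧
      LtNorm Ω s (fun x i => v x i - φ x i) < ε :=
  fun _ hε => stmt7_general (by omega) hΩext hr hrs.le hvr hvs hε
end

section
/- Let Ω ⊂ ℝⁿ be a bounded convex C² domain, μ > 0, p ∈ (3/2, 2], and v ∈ W^{2,2}(Ω) ∩ W₀^{1,2}(Ω). Then ∫_Ω (μ+|∇v|²)^{p−2} |∇∇v|² dx ≤ (1/(2p−3))² ∫_Ω (μ+|∇v|²)^{p−2} |Δv|² dx. -/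
open scoped BigOperators
open MeasureTheory

noncomputable def frobSq {n : ℕ} (A : Matrix (Fin n) (Fin n) ℝ) : ℝ :=
  ∑ i, ∑ j, (A i j) ^ 2

/-- Second derivatives `∂_k ∂_j v_i` of a vector field. -/
noncomputable def D3 {n : ℕ} (v : (Fin n → ℝ) → Fin n → ℝ) (x : Fin n → ℝ)
    (i j k : Fin n) : ℝ :=
  fderiv ℝ (fun y => Dmat v y i j) x (Pi.single k 1)

/-
For a `C²` function `u` vanishing on `∂Ω` the field `F = Δu ∇u - D²u ∇u` has divergence
`(Δu)² - |D²u|²`, and its flux through `∂Ω` is nonnegative: along a supporting hyperplane of the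
convex set `Ω` the function `u` has a one-signed second derivative. Testing with the weight
`w = (μ + |∇v|²)^(p - 2)` and summing over the components of `v` gives
`0 ≤ ∫ w (|Δv|² - |∇∇v|²) + ∑ᵢ ∇w · Fᵢ`, and by the inequalities of Cauchy–Schwarz and Young the
last term is small enough to be absorbed when `3/2 < p ≤ 2`.

No regularity of `∂Ω` is needed: the divergence theorem is replaced by integration by parts against
Lipschitz cutoffs which depend only on the gauge of `Ω` and decrease from `1` to `0` in a collar of
width `ε` at the boundary.
-/

open Set Filter Metric
open scoped NNReal Pointwise Topology

lemma lipschitzWith_mul_of_bounded {α : Type*} [PseudoMetricSpace α] {f g : α → ℝ}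
    {A B M N : ℝ≥0} (hf : LipschitzWith A f) (hg : LipschitzWith B g) (hM : ∀ x, ‖f x‖ ≤ M)
    (hN : ∀ x, ‖g x‖ ≤ N) : LipschitzWith (A * N + M * B) fun x => f x * g x := by
  refine LipschitzWith.of_dist_le_mul fun x y => ?_
  calc dist (f x * g x) (f y * g y) = ‖(f x - f y) * g x + f y * (g x - g y)‖ := by
        rw [dist_eq_norm]; congr 1; ring
    _ ≤ dist (f x) (f y) * ‖g x‖ + ‖f y‖ * dist (g x) (g y) := by
        rw [dist_eq_norm, dist_eq_norm, ← norm_mul, ← norm_mul]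
        exact norm_add_le _ _
    _ ≤ (A * dist x y) * N + M * (B * dist x y) := by
        gcongr
        exacts [hf.dist_le_mul x y, hN x, hM y, hg.dist_le_mul x y]
    _ = _ := by push_cast; ring

section IntegrationByParts

variable {E : Type*} [NormedAddCommGroup E] [NormedSpace ℝ E] [FiniteDimensional ℝ E]
  {C : ℝ≥0} {h f g : E → ℝ}

lemma exists_contDiff_hasCompactSupport_eventuallyEq {n : ℕ∞} {K : Set E} (hK : IsCompact K)
    (hg : ContDiff ℝ n g) :
    ∃ g' : E → ℝ, ContDiff ℝ n g' ∧ HasCompactSupport g' ∧ ∀ x ∈ K, g' =ᶠ[𝓝 x] g := by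
  obtain ⟨R, hR, hKR⟩ := hK.isBounded.subset_ball_lt 0 (0 : E)
  let η : ContDiffBump (0 : E) := ⟨R, R + 1, hR, lt_add_one R⟩
  refine ⟨fun x => η x * g x, η.contDiff.mul hg, η.hasCompactSupport.mul_right, fun x hx => ?_⟩
  filter_upwards [isOpen_ball.mem_nhds (hKR hx)] with y hy
  rw [η.one_of_mem_closedBall (ball_subset_closedBall hy), one_mul]

lemma exists_lipschitzWith_mul_contDiff (hh : LipschitzWith C h) (hhc : HasCompactSupport h)
    (hf : ContDiff ℝ 1 f) : ∃ D, LipschitzWith D fun x => h x * f x := by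
  obtain ⟨f', hf', hf'c, heq⟩ := exists_contDiff_hasCompactSupport_eventuallyEq hhc hf
  obtain ⟨B, hB⟩ := hf'.lipschitzWith_of_hasCompactSupport hf'c one_ne_zero
  obtain ⟨M, hM⟩ := hh.continuous.bounded_above_of_compact_support hhc
  obtain ⟨N, hN⟩ := hf'.continuous.bounded_above_of_compact_support hf'c
  have hmul : (fun x => h x * f x) = fun x => h x * f' x := by
    funext x
    by_cases hx : x ∈ tsupport h
    · rw [(heq x hx).self_of_nhds]
    · rw [image_eq_zero_of_notMem_tsupport hx, zero_mul, zero_mul]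
  rw [hmul]
  exact ⟨_, lipschitzWith_mul_of_bounded hh hB (fun x => (hM x).trans M.le_coe_toNNReal)
    fun x => (hN x).trans N.le_coe_toNNReal⟩

variable [MeasurableSpace E] [BorelSpace E] {ν : Measure E}

lemma integrable_fderiv_apply [IsFiniteMeasureOnCompacts ν] (hh : LipschitzWith C h)
    (hhc : HasCompactSupport h) {F : E → E} (hF : Continuous F) :
    Integrable (fun x => fderiv ℝ h x (F x)) ν := by
  obtain ⟨M, hM⟩ := (hhc.isCompact.image hF).isBounded.exists_norm_le
  have hsupp : Function.support (fun x => fderiv ℝ h x (F x)) ⊆ tsupport h := fun x hx =>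
    support_fderiv_subset ℝ fun h0 => hx (by simp only [h0, _root_.zero_apply])
  have hmeas : AEStronglyMeasurable (fun x => fderiv ℝ h x (F x)) ν :=
    isBoundedBilinearMap_apply.continuous.comp_aestronglyMeasurable₂
      (measurable_fderiv ℝ h).aestronglyMeasurable hF.aestronglyMeasurable
  refine (integrableOn_iff_integrable_of_support_subset hsupp).1
    (Measure.integrableOn_of_bounded (M := C * M) hhc.measure_lt_top.ne hmeas ?_)
  filter_upwards [ae_restrict_mem (isClosed_tsupport h).measurableSet] with x hx
  calc ‖fderiv ℝ h x (F x)‖ ≤ ‖fderiv ℝ h x‖ * ‖F x‖ := (fderiv ℝ h x).le_opNorm _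
    _ ≤ C * M := by
      gcongr
      exacts [norm_fderiv_le_of_lipschitz ℝ hh, hM _ (mem_image_of_mem F hx)]

variable [ν.IsAddHaarMeasure]

lemma integral_fderiv_mul_eq_neg (hh : LipschitzWith C h) (hg : ContDiff ℝ 1 g)
    (hgc : HasCompactSupport g) (a : E) :
    ∫ x, fderiv ℝ h x a * g x ∂ν = -∫ x, h x * fderiv ℝ g x a ∂ν := by
  obtain ⟨D, hD⟩ := hg.lipschitzWith_of_hasCompactSupport hgc one_ne_zero
  have hibp := hh.integral_lineDeriv_mul_eq (μ := ν) hD hgc a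
  simp only [(hg.differentiable one_ne_zero _).lineDeriv_eq_fderiv, map_neg] at hibp
  rw [← integral_neg]
  refine Eq.trans (integral_congr_ae ?_) (hibp.trans (by simp only [neg_mul, mul_comm (h _)]))
  filter_upwards [hh.ae_differentiableAt (μ := ν)] with x hx
  rw [hx.lineDeriv_eq_fderiv]

lemma integral_fderiv_mul_sub_translate (hh : LipschitzWith C h) (hhc : HasCompactSupport h)
    (hg : ContDiff ℝ 1 g) (hgc : HasCompactSupport g) (a c : E) :
    ∫ x, (g (x + c) - g x) * fderiv ℝ h x a ∂ν
      = -∫ x, (h (x - c) - h x) * fderiv ℝ g x a ∂ν := by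
  have hcont : Continuous fun x => fderiv ℝ g x a :=
    (hg.continuous_fderiv one_ne_zero).clm_apply continuous_const
  have hgc' : HasCompactSupport fun x => g (x + c) :=
    hgc.comp_homeomorph (Homeomorph.addRight c)
  have hg' : ContDiff ℝ 1 fun x => g (x + c) := hg.comp (contDiff_id.add contDiff_const)
  have hshift : ∫ x, h x * fderiv ℝ (fun y => g (y + c)) x a ∂ν
      = ∫ x, h (x - c) * fderiv ℝ g x a ∂ν := by
    rw [← integral_add_right_eq_self (fun x => h (x - c) * fderiv ℝ g x a) c]
    simp only [fderiv_comp_add_right, add_sub_cancel_right]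
  have hint : ∀ {φ : E → ℝ}, Continuous φ → Integrable (fun x => φ x * fderiv ℝ g x a) ν :=
    fun hφ => (hφ.mul hcont).integrable_of_hasCompactSupport (hgc.fderiv_apply ℝ a).mul_left
  have hint' : ∀ {φ : E → ℝ}, Continuous φ → Integrable (fun x => fderiv ℝ h x a * φ x) ν :=
    fun hφ => by
      simpa [mul_comm] using integrable_fderiv_apply (ν := ν) hh hhc (hφ.smul continuous_const)
  have hhc' : Continuous fun x => h (x - c) := hh.continuous.comp (by fun_prop)
  simp only [mul_comm _ (fderiv ℝ h _ a), mul_sub, sub_mul]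
  rw [integral_sub (hint' hg'.continuous) (hint' hg.continuous),
    integral_sub (hint hhc') (hint hh.continuous),
    integral_fderiv_mul_eq_neg hh hg' hgc', integral_fderiv_mul_eq_neg hh hg hgc, hshift]
  ring

lemma integral_fderiv_mul_fderiv_comm (hh : LipschitzWith C h) (hhc : HasCompactSupport h)
    (hg : ContDiff ℝ 1 g) (a b : E) :
    ∫ x, fderiv ℝ h x a * fderiv ℝ g x b ∂ν = ∫ x, fderiv ℝ h x b * fderiv ℝ g x a ∂ν := by
  wlog hgc : HasCompactSupport g generalizing g
  · obtain ⟨g', hg', hg'c, heq⟩ := exists_contDiff_hasCompactSupport_eventuallyEq hhc hg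
    have hcut : ∀ x c d, fderiv ℝ h x c * fderiv ℝ g' x d = fderiv ℝ h x c * fderiv ℝ g x d := by
      intro x c d
      by_cases hx : x ∈ tsupport h
      · rw [(heq x hx).fderiv_eq]
      · rw [fderiv_of_notMem_tsupport ℝ hx, _root_.zero_apply, zero_mul, zero_mul]
    simpa only [hcut] using this hg' hg'c
  obtain ⟨D, hD⟩ := hg.lipschitzWith_of_hasCompactSupport hgc one_ne_zero
  have hlimg := hD.integral_inv_smul_sub_mul_tendsto_integral_lineDeriv_mul (μ := ν)
    (integrable_fderiv_apply hh hhc (continuous_const (y := a))) b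
  have hlimh := hh.integral_inv_smul_sub_mul_tendsto_integral_lineDeriv_mul' (μ := ν) hhc
    ((hg.continuous_fderiv one_ne_zero).clm_apply (continuous_const (y := a))) (-b)
  have hquot : ∀ t : ℝ, ∫ x, (t⁻¹ • (g (x + t • b) - g x)) * fderiv ℝ h x a ∂ν
      = -∫ x, (t⁻¹ • (h (x + t • -b) - h x)) * fderiv ℝ g x a ∂ν := by
    intro t
    simp only [smul_eq_mul, mul_assoc, integral_const_mul, smul_neg, ← sub_eq_add_neg]
    rw [integral_fderiv_mul_sub_translate hh hhc hg hgc, mul_neg]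
  have hlim := tendsto_nhds_unique (hlimg.congr hquot) hlimh.neg
  simp only [(hg.differentiable one_ne_zero _).lineDeriv_eq_fderiv, lineDeriv_neg, neg_mul,
    integral_neg, neg_neg] at hlim
  simp only [mul_comm (fderiv ℝ h _ a)]
  rw [hlim]
  refine integral_congr_ae ?_
  filter_upwards [hh.ae_differentiableAt (μ := ν)] with x hx
  rw [hx.lineDeriv_eq_fderiv]

end IntegrationByParts

section WeakDivergence

variable {E : Type*} [NormedAddCommGroup E] [NormedSpace ℝ E] [MeasurableSpace E]

/-- The continuous function `q` is the divergence of the continuous vector field `F` with respect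
to `ν` in the weak sense. The test functions are Lipschitz rather than smooth, so that one may test
against the distance-like cutoffs of a convex set. -/
structure HasWeakDiv (ν : Measure E) (F : E → E) (q : E → ℝ) : Prop where
  continuous_field : Continuous F
  continuous_div : Continuous q
  integral_fderiv_apply_eq_neg : ∀ {h : E → ℝ} {C : ℝ≥0}, LipschitzWith C h →
    HasCompactSupport h → ∫ x, fderiv ℝ h x (F x) ∂ν = -∫ x, h x * q x ∂ν

namespace HasWeakDiv

variable [BorelSpace E] {ν : Measure E} [ν.IsAddHaarMeasure] {F : E → E} {q : E → ℝ}

lemma comp_add_right (hF : HasWeakDiv ν F q) (c : E) :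
    HasWeakDiv ν (fun x => F (x + c)) fun x => q (x + c) where
  continuous_field := hF.continuous_field.comp (continuous_add_const c)
  continuous_div := hF.continuous_div.comp (continuous_add_const c)
  integral_fderiv_apply_eq_neg {h C} hh hhc := by
    have hh' : LipschitzWith C fun x => h (x - c) :=
      LipschitzWith.of_dist_le_mul fun x y => by
        simpa only [dist_sub_right] using hh.dist_le_mul (x - c) (y - c)
    have hhc' : HasCompactSupport fun x => h (x - c) :=
      hhc.comp_homeomorph (Homeomorph.subRight c)
    rw [← integral_sub_right_eq_self (fun x => fderiv ℝ h x (F (x + c))) c,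
      ← integral_sub_right_eq_self (fun x => h x * q (x + c)) c]
    simp only [sub_add_cancel, ← fderiv_comp_sub]
    exact hF.integral_fderiv_apply_eq_neg hh' hhc'

variable [FiniteDimensional ℝ E]

lemma of_fderiv_swap {g : E → ℝ} (hg : ContDiff ℝ 1 g) (a b : E) :
    HasWeakDiv ν (fun x => fderiv ℝ g x b • a - fderiv ℝ g x a • b) 0 where
  continuous_field := by
    have hcont : ∀ c, Continuous fun x => fderiv ℝ g x c := fun c =>
      (hg.continuous_fderiv one_ne_zero).clm_apply continuous_const
    exact ((hcont b).smul continuous_const).sub ((hcont a).smul continuous_const)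
  continuous_div := continuous_zero
  integral_fderiv_apply_eq_neg {h C} hh hhc := by
    have hint : ∀ c d, Integrable (fun x => fderiv ℝ h x c * fderiv ℝ g x d) ν := fun c d => by
      have hcd : Continuous fun x => fderiv ℝ g x d • c :=
        ((hg.continuous_fderiv one_ne_zero).clm_apply continuous_const).smul continuous_const
      simpa only [map_smul, smul_eq_mul, mul_comm] using integrable_fderiv_apply (ν := ν) hh hhc hcd
    calc ∫ x, fderiv ℝ h x (fderiv ℝ g x b • a - fderiv ℝ g x a • b) ∂ν
        = ∫ x, (fderiv ℝ h x a * fderiv ℝ g x b - fderiv ℝ h x b * fderiv ℝ g x a) ∂ν := by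
          simp only [map_sub, map_smul, smul_eq_mul, mul_comm]
      _ = 0 := by
          rw [integral_sub (hint a b) (hint b a), integral_fderiv_mul_fderiv_comm hh hhc hg,
            sub_self]
      _ = -∫ x, h x * (0 : E → ℝ) x ∂ν := by
          simp only [Pi.zero_apply, mul_zero, integral_zero, neg_zero]

lemma smul (hF : HasWeakDiv ν F q) {w : E → ℝ} (hw : ContDiff ℝ 1 w) :
    HasWeakDiv ν (fun x => w x • F x) fun x => w x * q x + fderiv ℝ w x (F x) where
  continuous_field := hw.continuous.smul hF.continuous_field
  continuous_div := (hw.continuous.mul hF.continuous_div).add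
    ((hw.continuous_fderiv one_ne_zero).clm_apply hF.continuous_field)
  integral_fderiv_apply_eq_neg {h C} hh hhc := by
    obtain ⟨D, hD⟩ := exists_lipschitzWith_mul_contDiff hh hhc hw
    have hint : Integrable (fun x => fderiv ℝ h x (w x • F x)) ν :=
      integrable_fderiv_apply hh hhc (hw.continuous.smul hF.continuous_field)
    have hintw : Integrable (fun x => h x * fderiv ℝ w x (F x)) ν :=
      (hh.continuous.mul ((hw.continuous_fderiv one_ne_zero).clm_apply
        hF.continuous_field)).integrable_of_hasCompactSupport hhc.mul_right
    have hintq : Integrable (fun x => h x * w x * q x) ν :=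
      ((hh.continuous.mul hw.continuous).mul hF.continuous_div).integrable_of_hasCompactSupport
        hhc.mul_right.mul_right
    have hprod : (fun x => fderiv ℝ (fun y => h y * w y) x (F x)) =ᵐ[ν]
        fun x => fderiv ℝ h x (w x • F x) + h x * fderiv ℝ w x (F x) := by
      filter_upwards [hh.ae_differentiableAt (μ := ν)] with x hx
      rw [fderiv_fun_mul hx (hw.differentiable one_ne_zero x)]
      simp only [_root_.add_apply, _root_.smul_apply, map_smul, smul_eq_mul]
      ring
    have hibp := hF.integral_fderiv_apply_eq_neg hD hhc.mul_right
    rw [integral_congr_ae hprod, integral_add hint hintw] at hibp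
    simp only [mul_add, ← mul_assoc]
    rw [integral_add hintq hintw]
    linarith

lemma sum {κ : Type*} (s : Finset κ) {F : κ → E → E} {q : κ → E → ℝ}
    (hF : ∀ k ∈ s, HasWeakDiv ν (F k) (q k)) :
    HasWeakDiv ν (fun x => ∑ k ∈ s, F k x) fun x => ∑ k ∈ s, q k x where
  continuous_field := continuous_finsetSum _ fun k hk => (hF k hk).continuous_field
  continuous_div := continuous_finsetSum _ fun k hk => (hF k hk).continuous_div
  integral_fderiv_apply_eq_neg {h C} hh hhc := by
    have hint : ∀ k ∈ s, Integrable (fun x => h x * q k x) ν := fun k hk =>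
      (hh.continuous.mul (hF k hk).continuous_div).integrable_of_hasCompactSupport hhc.mul_right
    simp only [map_sum, Finset.mul_sum]
    rw [integral_finsetSum _ fun k hk => integrable_fderiv_apply hh hhc (hF k hk).continuous_field,
      integral_finsetSum _ hint, ← Finset.sum_neg_distrib]
    exact Finset.sum_congr rfl fun k hk => (hF k hk).integral_fderiv_apply_eq_neg hh hhc

end HasWeakDiv

end WeakDivergence

section Gauge

variable {E : Type*} [NormedAddCommGroup E] [NormedSpace ℝ E] {Ω : Set E} {x : E} {ε : ℝ}

lemma fderiv_gauge_apply_le (hΩc : Convex ℝ Ω) (h₀ : Ω ∈ 𝓝 0)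
    (hd : DifferentiableAt ℝ (gauge Ω) x) (z : E) : fderiv ℝ (gauge Ω) x z ≤ gauge Ω z := by
  refine le_of_tendsto (hd.hasFDerivAt.hasLineDerivAt z).tendsto_slope_zero_right ?_
  filter_upwards [self_mem_nhdsWithin] with t (ht : 0 < t)
  have hadd := gauge_add_le hΩc (absorbent_nhds_zero h₀) x (t • z)
  rw [gauge_smul_of_nonneg ht.le, smul_eq_mul] at hadd
  rw [smul_eq_mul, inv_mul_le_iff₀ ht]
  linarith

lemma fderiv_gauge_apply_self (hd : DifferentiableAt ℝ (gauge Ω) x) :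
    fderiv ℝ (gauge Ω) x x = gauge Ω x := by
  refine tendsto_nhds_unique (hd.hasFDerivAt.hasLineDerivAt x).tendsto_slope_zero_right
    (tendsto_const_nhds.congr' ?_)
  filter_upwards [self_mem_nhdsWithin] with t (ht : 0 < t)
  rw [show x + t • x = (1 + t) • x by module, gauge_smul_of_nonneg (by positivity)]
  simp only [smul_eq_mul]
  field_simp
  ring

/-- The continuous linear functional `L` defines a supporting hyperplane of the open set `Ω` at the
boundary point `y`, with `Ω` on the side where `L` is smaller. Functionals are used in place of
vectors because no inner product is fixed. -/
structure IsOuterNormal (Ω : Set E) (y : E) (L : E →L[ℝ] ℝ) : Prop where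
  mem_frontier : y ∈ frontier Ω
  apply_lt : ∀ z ∈ Ω, L z < L y

lemma IsOuterNormal.comp_add_right {y c : E} {L : E →L[ℝ] ℝ}
    (h : IsOuterNormal ((fun z => z + c) ⁻¹' Ω) y L) : IsOuterNormal Ω (y + c) L where
  mem_frontier := by
    have hpre := (Homeomorph.addRight c).preimage_frontier Ω
    exact hpre.ge h.mem_frontier
  apply_lt z hz := by
    have hlt := h.apply_lt (z - c) (by simpa using hz)
    rw [map_sub] at hlt
    rw [map_add]
    linarith

lemma gauge_lt_one_iff_mem (hΩo : IsOpen Ω) (hΩc : Convex ℝ Ω) (h₀ : 0 ∈ Ω) :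
    gauge Ω x < 1 ↔ x ∈ Ω := by
  rw [gauge_lt_one_iff_mem_interior hΩc (hΩo.mem_nhds h₀), hΩo.interior_eq]

lemma isOuterNormal_fderiv_gauge (hΩo : IsOpen Ω) (hΩc : Convex ℝ Ω) (h₀ : 0 ∈ Ω)
    (hd : DifferentiableAt ℝ (gauge Ω) x) (hx : 0 < gauge Ω x) :
    IsOuterNormal Ω ((gauge Ω x)⁻¹ • x) (fderiv ℝ (gauge Ω) x) where
  mem_frontier := by
    rw [← gauge_eq_one_iff_mem_frontier hΩc (hΩo.mem_nhds h₀),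
      gauge_smul_of_nonneg (inv_nonneg.2 hx.le), smul_eq_mul, inv_mul_cancel₀ hx.ne']
  apply_lt z hz := by
    rw [map_smul, fderiv_gauge_apply_self hd, smul_eq_mul, inv_mul_cancel₀ hx.ne']
    exact (fderiv_gauge_apply_le hΩc (hΩo.mem_nhds h₀) hd z).trans_lt
      ((gauge_lt_one_iff_mem hΩo hΩc h₀).2 hz)

/-- The cutoff which decreases linearly in the gauge, from `1` on `(1 - ε) • Ω` to `0` on the
boundary of `Ω`. -/
noncomputable def collarCutoff (Ω : Set E) (ε : ℝ) (x : E) : ℝ :=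
  min 1 (max 0 (ε⁻¹ * (1 - gauge Ω x)))

lemma collarCutoff_nonneg : 0 ≤ collarCutoff Ω ε x := le_min zero_le_one (le_max_left _ _)

lemma collarCutoff_le_one : collarCutoff Ω ε x ≤ 1 := min_le_left _ _

lemma collarCutoff_of_one_le (hε : 0 < ε) (hx : 1 ≤ gauge Ω x) : collarCutoff Ω ε x = 0 := by
  have hle : ε⁻¹ * (1 - gauge Ω x) ≤ 0 :=
    mul_nonpos_of_nonneg_of_nonpos (inv_nonneg.2 hε.le) (sub_nonpos.2 hx)
  rw [collarCutoff, max_eq_left hle, min_eq_right zero_le_one]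

lemma collarCutoff_of_le (hε : 0 < ε) (hx : gauge Ω x ≤ 1 - ε) : collarCutoff Ω ε x = 1 := by
  have hge : 1 ≤ ε⁻¹ * (1 - gauge Ω x) := by
    rw [le_inv_mul_iff₀ hε]
    linarith
  exact min_eq_left (hge.trans (le_max_right _ _))

lemma collarCutoff_of_mem_Ioo (hε : 0 < ε) (hx : gauge Ω x ∈ Ioo (1 - ε) 1) :
    collarCutoff Ω ε x = ε⁻¹ * (1 - gauge Ω x) := by
  have hnonneg : 0 ≤ ε⁻¹ * (1 - gauge Ω x) :=
    mul_nonneg (inv_nonneg.2 hε.le) (sub_nonneg.2 hx.2.le)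
  have hle : ε⁻¹ * (1 - gauge Ω x) ≤ 1 := by
    rw [inv_mul_le_iff₀ hε]
    linarith [hx.1]
  rw [collarCutoff, max_eq_right hnonneg, min_eq_right hle]

lemma exists_lipschitzWith_collarCutoff (hΩc : Convex ℝ Ω) (h₀ : Ω ∈ 𝓝 0) (ε : ℝ) :
    ∃ D, LipschitzWith D (collarCutoff Ω ε) := by
  obtain ⟨D, hD⟩ := hΩc.lipschitz_gauge h₀
  exact ⟨_, (((lipschitzWith_smul ε⁻¹).comp
    ((LipschitzWith.const (1 : ℝ)).sub hD)).const_max 0).const_min 1⟩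

lemma fderiv_collarCutoff_of_notMem (hε : 0 < ε) (hx : gauge Ω x ∉ Ioo (1 - ε) 1) :
    fderiv ℝ (collarCutoff Ω ε) x = 0 := by
  rcases le_or_gt (gauge Ω x) (1 - ε) with hle | hlt
  · refine IsLocalMax.fderiv_eq_zero (Eventually.of_forall fun z => ?_)
    rw [collarCutoff_of_le hε hle]
    exact collarCutoff_le_one
  · refine IsLocalMin.fderiv_eq_zero (Eventually.of_forall fun z => ?_)
    rw [collarCutoff_of_one_le hε (not_lt.1 fun h => hx ⟨hlt, h⟩)]
    exact collarCutoff_nonneg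

lemma fderiv_collarCutoff_of_mem (hΩc : Convex ℝ Ω) (h₀ : Ω ∈ 𝓝 0) (hε : 0 < ε)
    (hd : DifferentiableAt ℝ (gauge Ω) x) (hx : gauge Ω x ∈ Ioo (1 - ε) 1) :
    fderiv ℝ (collarCutoff Ω ε) x = -ε⁻¹ • fderiv ℝ (gauge Ω) x := by
  have heq : collarCutoff Ω ε =ᶠ[𝓝 x] fun z => ε⁻¹ • (1 - gauge Ω z) := by
    filter_upwards [(continuous_gauge hΩc h₀).continuousAt.preimage_mem_nhds
      (isOpen_Ioo.mem_nhds hx)] with z hz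
    exact collarCutoff_of_mem_Ioo hε hz
  rw [heq.fderiv_eq, fderiv_fun_const_smul (hd.const_sub 1), fderiv_const_sub, smul_neg, neg_smul]

end Gauge

section Collar

variable {E : Type*} [NormedAddCommGroup E] [NormedSpace ℝ E] [FiniteDimensional ℝ E]
  {Ω : Set E} {ε : ℝ} {F : E → E} {q : E → ℝ}

lemma eventually_neg_le_fderiv_gauge_apply (hΩo : IsOpen Ω) (hΩb : Bornology.IsBounded Ω)
    (hΩc : Convex ℝ Ω) (h₀ : 0 ∈ Ω) (hF : Continuous F)
    (hflux : ∀ y L, IsOuterNormal Ω y L → 0 ≤ L (F y)) {δ : ℝ} (hδ : 0 < δ) :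
    ∀ᶠ ε in 𝓝[>] (0 : ℝ), ∀ x, DifferentiableAt ℝ (gauge Ω) x →
      gauge Ω x ∈ Ioo (1 - ε) 1 → -δ ≤ fderiv ℝ (gauge Ω) x (F x) := by
  obtain ⟨D, hD⟩ := hΩc.lipschitz_gauge (hΩo.mem_nhds h₀)
  obtain ⟨R, hR, hΩR⟩ := hΩb.closure.exists_pos_norm_le
  obtain ⟨η, hη, hFη⟩ := Metric.uniformContinuousOn_iff.1
    (hΩb.isCompact_closure.uniformContinuousOn_of_continuous hF.continuousOn) (δ / (D + 1))
    (by positivity)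
  filter_upwards [Ioo_mem_nhdsGT (lt_min one_pos (div_pos hη hR))] with ε hε x hd hx
  have hε₁ : ε < 1 := hε.2.trans_le (min_le_left _ _)
  have hεη : ε * R < η := (lt_div_iff₀ hR).1 (hε.2.trans_le (min_le_right _ _))
  have hpos : 0 < gauge Ω x := lt_trans (sub_pos.2 hε₁) hx.1
  set y := (gauge Ω x)⁻¹ • x with hy
  have hL : IsOuterNormal Ω y (fderiv ℝ (gauge Ω) x) :=
    isOuterNormal_fderiv_gauge hΩo hΩc h₀ hd hpos
  have hdist : dist x y < η := by
    have hxy : x - y = -((1 - gauge Ω x) • y) := by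
      rw [hy, sub_smul, one_smul, smul_inv_smul₀ hpos.ne', neg_sub]
    rw [dist_eq_norm, hxy, norm_neg, norm_smul, Real.norm_of_nonneg (sub_nonneg.2 hx.2.le)]
    have hyR : ‖y‖ ≤ R := hΩR y hL.mem_frontier.1
    calc (1 - gauge Ω x) * ‖y‖ ≤ ε * R := by
          gcongr
          · exact hε.1.le
          · linarith [hx.1]
      _ < η := hεη
  have hclose : |fderiv ℝ (gauge Ω) x (F x - F y)| ≤ δ := by
    have hxΩ : x ∈ closure Ω := subset_closure ((gauge_lt_one_iff_mem hΩo hΩc h₀).1 hx.2)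
    have hFxy := (hFη x hxΩ y hL.mem_frontier.1 hdist).le
    rw [dist_eq_norm] at hFxy
    calc ‖fderiv ℝ (gauge Ω) x (F x - F y)‖ ≤ D * (δ / (D + 1)) :=
          (fderiv ℝ (gauge Ω) x).le_of_opNorm_le_of_le (norm_fderiv_le_of_lipschitz ℝ hD) hFxy
      _ ≤ δ := by
          rw [← mul_div_assoc, div_le_iff₀ (by positivity)]
          nlinarith
  rw [map_sub] at hclose
  linarith [(abs_le.1 hclose).1, hflux y _ hL]

lemma hasCompactSupport_collarCutoff (hΩo : IsOpen Ω) (hΩb : Bornology.IsBounded Ω)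
    (hΩc : Convex ℝ Ω) (h₀ : 0 ∈ Ω) (hε : 0 < ε) : HasCompactSupport (collarCutoff Ω ε) :=
  HasCompactSupport.intro hΩb.isCompact_closure fun _ hx => collarCutoff_of_one_le hε <|
    not_lt.1 fun hlt => hx (subset_closure ((gauge_lt_one_iff_mem hΩo hΩc h₀).1 hlt))

variable [MeasurableSpace E] [BorelSpace E] {ν : Measure E} [ν.IsAddHaarMeasure]

lemma measureReal_collar_le (hΩo : IsOpen Ω) (hΩb : Bornology.IsBounded Ω) (hΩc : Convex ℝ Ω)
    (h₀ : 0 ∈ Ω) (hε : 0 < ε) (hε₁ : ε < 1) :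
    ν.real (gauge Ω ⁻¹' Ioo (1 - ε) 1) ≤ Module.finrank ℝ E * ε * ν.real Ω := by
  have hpos : 0 < 1 - ε := sub_pos.2 hε₁
  have hgauge : ∀ {x}, gauge Ω x < 1 ↔ x ∈ Ω := gauge_lt_one_iff_mem hΩo hΩc h₀
  have hinner : (1 - ε) • Ω ⊆ Ω ∩ {x | gauge Ω x < 1 - ε} := by
    rintro _ ⟨x, hx, rfl⟩
    have hlt : gauge Ω ((1 - ε) • x) < 1 - ε := by
      rw [gauge_smul_of_nonneg hpos.le, smul_eq_mul]
      exact mul_lt_of_lt_one_right hpos (hgauge.2 hx)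
    exact ⟨hgauge.1 (hlt.trans (by linarith)), hlt⟩
  have hcollar : gauge Ω ⁻¹' Ioo (1 - ε) 1 ⊆ Ω \ (1 - ε) • Ω := fun x hx =>
    ⟨hgauge.1 hx.2, fun hx' => hx.1.not_gt (hinner hx').2⟩
  have hscale : ν.real ((1 - ε) • Ω) = (1 - ε) ^ Module.finrank ℝ E * ν.real Ω := by
    rw [measureReal_def, Measure.addHaar_smul, ENNReal.toReal_mul,
      ENNReal.toReal_ofReal (abs_nonneg _), abs_of_pos (pow_pos hpos _), measureReal_def]
  have hbernoulli : 1 - Module.finrank ℝ E * ε ≤ (1 - ε) ^ Module.finrank ℝ E := by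
    simpa only [mul_neg, ← sub_eq_add_neg] using
      one_add_mul_le_pow (a := -ε) (by linarith) (Module.finrank ℝ E)
  calc ν.real (gauge Ω ⁻¹' Ioo (1 - ε) 1) ≤ ν.real (Ω \ (1 - ε) • Ω) :=
        measureReal_mono hcollar ((measure_mono sdiff_subset).trans_lt hΩb.measure_lt_top).ne
    _ = ν.real Ω - (1 - ε) ^ Module.finrank ℝ E * ν.real Ω := by
        rw [measureReal_sdiff (hinner.trans inter_subset_left)
          (hΩo.measurableSet.const_smul_of_ne_zero hpos.ne')
          hΩb.measure_lt_top.ne, hscale]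
    _ ≤ Module.finrank ℝ E * ε * ν.real Ω := by
        nlinarith [measureReal_nonneg (μ := ν) (s := Ω)]

lemma integral_fderiv_collarCutoff_apply_le (hΩo : IsOpen Ω) (hΩb : Bornology.IsBounded Ω)
    (hΩc : Convex ℝ Ω) (h₀ : 0 ∈ Ω) (hε : 0 < ε) (hε₁ : ε < 1) (hF : Continuous F) {δ : ℝ}
    (hδ : 0 ≤ δ) (hflux : ∀ x, DifferentiableAt ℝ (gauge Ω) x → gauge Ω x ∈ Ioo (1 - ε) 1 →
      -δ ≤ fderiv ℝ (gauge Ω) x (F x)) :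
    ∫ x, fderiv ℝ (collarCutoff Ω ε) x (F x) ∂ν ≤ Module.finrank ℝ E * ν.real Ω * δ := by
  have hΩn : Ω ∈ 𝓝 0 := hΩo.mem_nhds h₀
  set A : Set E := gauge Ω ⁻¹' Ioo (1 - ε) 1
  have hA : MeasurableSet A := (isOpen_Ioo.preimage (continuous_gauge hΩc hΩn)).measurableSet
  have hAΩ : A ⊆ Ω := fun x hx => (gauge_lt_one_iff_mem hΩo hΩc h₀).1 hx.2
  have hAfin : ν A ≠ ⊤ := ((measure_mono hAΩ).trans_lt hΩb.measure_lt_top).ne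
  obtain ⟨C, hC⟩ := exists_lipschitzWith_collarCutoff hΩc hΩn ε
  obtain ⟨D, hD⟩ := hΩc.lipschitz_gauge hΩn
  have hpt : ∀ᵐ x ∂ν, fderiv ℝ (collarCutoff Ω ε) x (F x) ≤ A.indicator (fun _ => ε⁻¹ * δ) x := by
    filter_upwards [hD.ae_differentiableAt (μ := ν)] with x hd
    by_cases hx : x ∈ A
    · rw [indicator_of_mem hx, fderiv_collarCutoff_of_mem hΩc hΩn hε hd hx, _root_.smul_apply,
        smul_eq_mul, neg_mul, ← mul_neg]
      exact mul_le_mul_of_nonneg_left (by linarith [hflux x hd hx]) (inv_nonneg.2 hε.le)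
    · rw [indicator_of_notMem hx, fderiv_collarCutoff_of_notMem hε hx, _root_.zero_apply]
  calc ∫ x, fderiv ℝ (collarCutoff Ω ε) x (F x) ∂ν
      ≤ ∫ x, A.indicator (fun _ => ε⁻¹ * δ) x ∂ν :=
        integral_mono_ae (integrable_fderiv_apply hC
          (hasCompactSupport_collarCutoff hΩo hΩb hΩc h₀ hε) hF)
          ((integrable_indicator_iff hA).2 (integrableOn_const hAfin)) hpt
    _ = ν.real A * (ε⁻¹ * δ) := by rw [integral_indicator_const _ hA, smul_eq_mul]
    _ ≤ Module.finrank ℝ E * ε * ν.real Ω * (ε⁻¹ * δ) := by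
        gcongr
        exact measureReal_collar_le hΩo hΩb hΩc h₀ hε hε₁
    _ = Module.finrank ℝ E * ν.real Ω * δ := by field_simp

lemma tendsto_integral_collarCutoff_mul (hΩo : IsOpen Ω) (hΩb : Bornology.IsBounded Ω)
    (hΩc : Convex ℝ Ω) (h₀ : 0 ∈ Ω) (hq : Continuous q) :
    Tendsto (fun ε => ∫ x, collarCutoff Ω ε x * q x ∂ν) (𝓝[>] 0) (𝓝 (∫ x in Ω, q x ∂ν)) := by
  rw [← integral_indicator hΩo.measurableSet]
  have hgauge : ∀ {x}, gauge Ω x < 1 ↔ x ∈ Ω := gauge_lt_one_iff_mem hΩo hΩc h₀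
  have hqΩ : IntegrableOn q Ω ν :=
    (hq.continuousOn.integrableOn_compact hΩb.isCompact_closure).mono_set subset_closure
  refine tendsto_integral_filter_of_dominated_convergence (Ω.indicator fun x => ‖q x‖) ?_ ?_
    ((integrable_indicator_iff hΩo.measurableSet).2 hqΩ.norm) (Eventually.of_forall fun x => ?_)
  · refine Eventually.of_forall fun ε => ?_
    obtain ⟨D, hD⟩ := exists_lipschitzWith_collarCutoff hΩc (hΩo.mem_nhds h₀) ε
    exact (hD.continuous.mul hq).aestronglyMeasurable
  · filter_upwards [self_mem_nhdsWithin] with ε (hε : 0 < ε)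
    refine Eventually.of_forall fun x => ?_
    by_cases hx : x ∈ Ω
    · rw [indicator_of_mem hx, norm_mul, Real.norm_of_nonneg collarCutoff_nonneg]
      exact mul_le_of_le_one_left (norm_nonneg _) collarCutoff_le_one
    · rw [indicator_of_notMem hx, collarCutoff_of_one_le hε (not_lt.1 (hgauge.not.2 hx)), zero_mul,
        norm_zero]
  · refine tendsto_const_nhds.congr' ?_
    by_cases hx : x ∈ Ω
    · filter_upwards [Ioc_mem_nhdsGT (sub_pos.2 (hgauge.2 hx))] with ε hε
      rw [indicator_of_mem hx, collarCutoff_of_le hε.1 (by linarith [hε.2]), one_mul]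
    · filter_upwards [self_mem_nhdsWithin] with ε (hε : 0 < ε)
      rw [indicator_of_notMem hx, collarCutoff_of_one_le hε (not_lt.1 (hgauge.not.2 hx)), zero_mul]

theorem HasWeakDiv.setIntegral_nonneg (hFq : HasWeakDiv ν F q) (hΩo : IsOpen Ω)
    (hΩb : Bornology.IsBounded Ω) (hΩc : Convex ℝ Ω)
    (hflux : ∀ y L, IsOuterNormal Ω y L → 0 ≤ L (F y)) : 0 ≤ ∫ x in Ω, q x ∂ν := by
  rcases Ω.eq_empty_or_nonempty with rfl | ⟨c, hc⟩
  · simp only [setIntegral_empty, le_refl]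
  wlog h₀ : (0 : E) ∈ Ω generalizing Ω F q c
  · have hpre : IsOpen ((fun z => z + c) ⁻¹' Ω) := hΩo.preimage (continuous_add_const c)
    have hbdd : Bornology.IsBounded ((fun z => z + c) ⁻¹' Ω) :=
      (IsometryEquiv.addRight c).isometry.antilipschitz.isBounded_preimage hΩb
    have := this (hFq.comp_add_right c) hpre hbdd (hΩc.translate_preimage_left c)
      (fun y L hL => hflux _ _ hL.comp_add_right) 0 (by simpa using hc) (by simpa using hc)
    rwa [(measurePreserving_add_right ν c).setIntegral_preimage_emb
      (measurableEmbedding_addRight c) q Ω] at this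
  have hlower : ∀ δ > 0, -(Module.finrank ℝ E * ν.real Ω * δ) ≤ ∫ x in Ω, q x ∂ν := by
    intro δ hδ
    refine ge_of_tendsto (tendsto_integral_collarCutoff_mul hΩo hΩb hΩc h₀ hFq.continuous_div) ?_
    filter_upwards [Ioo_mem_nhdsGT one_pos, eventually_neg_le_fderiv_gauge_apply hΩo hΩb hΩc h₀
      hFq.continuous_field hflux hδ] with ε hε hε'
    obtain ⟨C, hC⟩ := exists_lipschitzWith_collarCutoff hΩc (hΩo.mem_nhds h₀) ε
    have hdiv := hFq.integral_fderiv_apply_eq_neg hC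
      (hasCompactSupport_collarCutoff hΩo hΩb hΩc h₀ hε.1)
    linarith [integral_fderiv_collarCutoff_apply_le (ν := ν) hΩo hΩb hΩc h₀ hε.1 hε.2
      hFq.continuous_field hδ.le hε']
  have hlim : Tendsto (fun δ : ℝ => -(Module.finrank ℝ E * ν.real Ω * δ)) (𝓝[>] 0) (𝓝 0) := by
    have hcont : Continuous fun δ : ℝ => -(Module.finrank ℝ E * ν.real Ω * δ) := by fun_prop
    simpa using (hcont.tendsto 0).mono_left nhdsWithin_le_nhds
  exact le_of_tendsto hlim (eventually_mem_nhdsWithin.mono hlower)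

end Collar

section Boundary

variable {E : Type*} [NormedAddCommGroup E] [NormedSpace ℝ E] {Ω : Set E} {x₀ y τ : E}
  {L : E →L[ℝ] ℝ} {u : E → ℝ}

lemma frontier_inter_nonempty_of_isPreconnected {X : Type*} [TopologicalSpace X] {s t : Set X}
    (hs : IsPreconnected s) (hst : (s ∩ t).Nonempty) (hst' : (s ∩ tᶜ).Nonempty) :
    (s ∩ frontier t).Nonempty := by
  rw [inter_nonempty_iff_exists_left]
  by_contra! hfr
  have hcover : s ⊆ interior t ∪ interior tᶜ := fun x hx => by
    rw [interior_compl]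
    by_contra! hx'
    rw [mem_union, not_or, notMem_compl_iff] at hx'
    exact hfr x hx ⟨hx'.2, hx'.1⟩
  obtain ⟨a, has, hat⟩ := hst
  obtain ⟨b, hbs, hbt⟩ := hst'
  have ha : a ∈ interior t :=
    (hcover has).resolve_right fun h => interior_subset h hat
  have hsub : s ⊆ interior t := hs.subset_left_of_subset_union isOpen_interior isOpen_interior
    (disjoint_compl_right.mono interior_subset interior_subset) hcover ⟨a, has, ha⟩
  exact hbt (interior_subset (hsub hbs))

lemma nonpos_of_fderiv_nonneg_on_segment {a b : E} (hu : Differentiable ℝ u)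
    (hbd : ∀ x ∈ frontier Ω, u x = 0) (ha : a ∉ Ω) (hb : b ∈ Ω)
    (hmono : ∀ z ∈ segment ℝ a b, 0 ≤ fderiv ℝ u z (b - a)) : u a ≤ 0 := by
  obtain ⟨z, hz, hzfr⟩ := frontier_inter_nonempty_of_isPreconnected
    (convex_segment a b).isPreconnected ⟨b, right_mem_segment .., hb⟩ ⟨a, left_mem_segment .., ha⟩
  obtain ⟨ξ, hξ, hmvt⟩ := domain_mvt (fun z _ => (hu z).hasFDerivAt.hasFDerivWithinAt)
    (convex_segment a b) (left_mem_segment ..) hz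
  have hξab : ξ ∈ segment ℝ a b := (convex_segment a b).segment_subset (left_mem_segment ..) hz hξ
  rw [segment_eq_image'] at hz
  obtain ⟨θ, hθ, rfl⟩ := hz
  rw [hbd _ hzfr, add_sub_cancel_left, map_smul, smul_eq_mul] at hmvt
  linarith [mul_nonneg hθ.1 (hmono ξ hξab)]

-- Slightly inside the tangent line lie points of `Ω`, so between them and the line there are zeros
-- of `u`; as `u` increases inwards, it is nonpositive on the line.
lemma IsOuterNormal.isLocalMax_add_smul (hL : IsOuterNormal Ω y L) (hΩo : IsOpen Ω)
    (hΩc : Convex ℝ Ω) (hu : ContDiff ℝ 1 u) (hbd : ∀ x ∈ frontier Ω, u x = 0) (hx₀ : x₀ ∈ Ω)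
    (hpos : 0 < fderiv ℝ u y (x₀ - y)) (hτ : L τ = 0) :
    IsLocalMax (fun s : ℝ => u (y + s • τ)) 0 := by
  have hfd : Continuous fun z => fderiv ℝ u z (x₀ - y) :=
    (hu.continuous_fderiv one_ne_zero).clm_apply continuous_const
  obtain ⟨r, hr, hincr⟩ := Metric.eventually_nhds_iff_ball.1
    (continuousAt_const.eventually_lt hfd.continuousAt hpos)
  obtain ⟨T, hTball, hT⟩ : ∃ T : ℝ, y + T • (x₀ - y) ∈ ball y r ∧ T ∈ Ioc 0 1 := by
    have hcont : Continuous fun T : ℝ => y + T • (x₀ - y) := by fun_prop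
    have hnear : ∀ᶠ T : ℝ in 𝓝 0, y + T • (x₀ - y) ∈ ball y r :=
      hcont.continuousAt.eventually_mem (by simpa using ball_mem_nhds y hr)
    exact ((hnear.filter_mono nhdsWithin_le_nhds).and (Ioc_mem_nhdsGT one_pos)).exists
  have hTΩ : y + T • (x₀ - y) ∈ Ω := interior_subset <|
    hΩc.add_smul_sub_mem_interior' hL.mem_frontier.1 (hΩo.interior_eq.symm ▸ hx₀) hT
  have hline : Continuous fun s : ℝ => y + s • τ := by fun_prop
  have hline' : Continuous fun s : ℝ => y + s • τ + T • (x₀ - y) := by fun_prop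
  have hnear : ∀ᶠ s : ℝ in 𝓝 0, y + s • τ ∈ ball y r :=
    hline.continuousAt.eventually_mem (by simpa using ball_mem_nhds y hr)
  have hnear' : ∀ᶠ s : ℝ in 𝓝 0, y + s • τ + T • (x₀ - y) ∈ ball y r ∩ Ω :=
    hline'.continuousAt.eventually_mem <| (isOpen_ball.inter hΩo).mem_nhds <| by
      simpa using And.intro hTball hTΩ
  filter_upwards [hnear, hnear'] with s hs hs'
  have hout : y + s • τ ∉ Ω := fun h => by
    simpa only [map_add, map_smul, hτ, smul_zero, add_zero, lt_irrefl] using hL.apply_lt _ h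
  simp only [zero_smul, add_zero, hbd y hL.mem_frontier]
  refine nonpos_of_fderiv_nonneg_on_segment (hu.differentiable one_ne_zero) hbd hout hs'.2
    fun z hz => ?_
  rw [add_sub_cancel_left, map_smul, smul_eq_mul]
  exact mul_nonneg hT.1.le (hincr z ((convex_ball y r).segment_subset hs hs'.1 hz)).le

lemma deriv_deriv_nonpos_of_isLocalMax {φ : ℝ → ℝ} {a : ℝ} (h : IsLocalMax φ a)
    (hc : ContinuousAt φ a) : deriv (deriv φ) a ≤ 0 := by
  by_contra! hpos
  have hmin : IsLocalMin φ a := isLocalMin_of_deriv_deriv_pos hpos h.deriv_eq_zero hc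
  have hconst : φ =ᶠ[𝓝 a] fun _ => φ a := by
    filter_upwards [h, hmin] with x using le_antisymm
  rw [hconst.deriv.deriv_eq] at hpos
  simp at hpos

lemma contDiff_fderiv_apply (hu : ContDiff ℝ 2 u) (a : E) :
    ContDiff ℝ 1 fun x => fderiv ℝ u x a :=
  (hu.fderiv_right (by norm_num)).clm_apply contDiff_const

lemma continuous_fderiv_fderiv_apply (hu : ContDiff ℝ 2 u) (a b : E) :
    Continuous fun x => fderiv ℝ (fderiv ℝ u) x a b :=
  (((hu.fderiv_right (m := 1) (by norm_num)).continuous_fderiv one_ne_zero).clm_apply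
    continuous_const).clm_apply continuous_const

lemma fderiv_fderiv_apply (hu : ContDiff ℝ 2 u) (x a b : E) :
    fderiv ℝ (fun z => fderiv ℝ u z a) x b = fderiv ℝ (fderiv ℝ u) x b a := by
  have hd : DifferentiableAt ℝ (fderiv ℝ u) x :=
    (hu.fderiv_right (m := 1) (by norm_num)).differentiable one_ne_zero x
  rw [fderiv_clm_apply hd (differentiableAt_const a)]
  simp

lemma deriv_comp_add_smul (hu : Differentiable ℝ u) (y τ : E) (s : ℝ) :
    deriv (fun s : ℝ => u (y + s • τ)) s = fderiv ℝ u (y + s • τ) τ := by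
  have hline : HasDerivAt (fun s : ℝ => y + s • τ) τ s := by
    simpa using ((hasDerivAt_id s).smul_const τ).const_add y
  exact ((hu _).hasFDerivAt.comp_hasDerivAt s hline).deriv

lemma IsOuterNormal.fderiv_fderiv_apply_nonpos (hL : IsOuterNormal Ω y L) (hΩo : IsOpen Ω)
    (hΩc : Convex ℝ Ω) (hu : ContDiff ℝ 2 u) (hbd : ∀ x ∈ frontier Ω, u x = 0) (hx₀ : x₀ ∈ Ω)
    (hpos : 0 < fderiv ℝ u y (x₀ - y)) (hτ : L τ = 0) : fderiv ℝ (fderiv ℝ u) y τ τ ≤ 0 := by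
  have hmax := hL.isLocalMax_add_smul hΩo hΩc (hu.of_le (by norm_num)) hbd hx₀ hpos hτ
  have hcont : Continuous fun s : ℝ => u (y + s • τ) := hu.continuous.comp (by fun_prop)
  have hnonpos := deriv_deriv_nonpos_of_isLocalMax hmax hcont.continuousAt
  rw [funext (deriv_comp_add_smul (hu.differentiable two_ne_zero) y τ),
    deriv_comp_add_smul ((contDiff_fderiv_apply hu τ).differentiable one_ne_zero),
    fderiv_fderiv_apply hu, zero_smul, add_zero] at hnonpos
  exact hnonpos

lemma IsOuterNormal.exists_fderiv_eq_neg_smul (hL : IsOuterNormal Ω y L) (hΩo : IsOpen Ω)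
    (hΩc : Convex ℝ Ω) (hu : ContDiff ℝ 1 u) (hbd : ∀ x ∈ frontier Ω, u x = 0) (hx₀ : x₀ ∈ Ω)
    (hpos : 0 < fderiv ℝ u y (x₀ - y)) : ∃ c < (0 : ℝ), fderiv ℝ u y = c • L := by
  have hLneg : L (x₀ - y) < 0 := by
    rw [map_sub]
    exact sub_neg.2 (hL.apply_lt _ hx₀)
  refine ⟨fderiv ℝ u y (x₀ - y) / L (x₀ - y), div_neg_of_pos_of_neg hpos hLneg, ?_⟩
  ext z
  set τ := z - (L z / L (x₀ - y)) • (x₀ - y) with hτdef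
  have hτ : L τ = 0 := by
    rw [hτdef, map_sub, map_smul, smul_eq_mul, div_mul_cancel₀ _ hLneg.ne, sub_self]
  have hcrit := (hL.isLocalMax_add_smul hΩo hΩc hu hbd hx₀ hpos hτ).deriv_eq_zero
  rw [deriv_comp_add_smul (hu.differentiable one_ne_zero), zero_smul, add_zero, hτdef, map_sub,
    map_smul, sub_eq_zero] at hcrit
  rw [hcrit]
  simp only [smul_eq_mul, _root_.smul_apply]
  ring

end Boundary

section Bochner

variable {E κ : Type*} [NormedAddCommGroup E] [NormedSpace ℝ E] [Fintype κ] {e : κ → E} {u : E → ℝ}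

/-- The vector field `Δu ∇u - D²u ∇u`, whose divergence is `(Δu)² - |D²u|²`. The gradient, the
Laplacian and the norms are formed from the derivatives along the vectors `e k`, which need not be
orthonormal. -/
noncomputable def bochnerFlux (e : κ → E) (u : E → ℝ) (x : E) : E :=
  ∑ j, ∑ k, fderiv ℝ u x (e j) •
    (fderiv ℝ (fderiv ℝ u) x (e k) (e k) • e j - fderiv ℝ (fderiv ℝ u) x (e j) (e k) • e k)

/-- The difference `(Δu)² - |D²u|²`, which is the divergence of `bochnerFlux e u`, for the
derivatives along the vectors `e k`. -/
noncomputable def bochnerDiv (e : κ → E) (u : E → ℝ) (x : E) : ℝ :=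
  (∑ k, fderiv ℝ (fderiv ℝ u) x (e k) (e k)) ^ 2
    - ∑ j, ∑ k, fderiv ℝ (fderiv ℝ u) x (e j) (e k) ^ 2

section Flux

variable {Ω : Set E} {y : E} {L : E →L[ℝ] ℝ}

lemma bochnerFlux_neg : bochnerFlux e (-u) = bochnerFlux e u := by
  have hfd : fderiv ℝ (-u) = -fderiv ℝ u := funext fun x => fderiv_neg
  ext x
  simp only [bochnerFlux, hfd, fderiv_neg, _root_.neg_apply, neg_smul, smul_sub, sub_neg_eq_add,
    neg_add_eq_sub]

lemma two_mul_apply_bochnerFlux {c : ℝ} (hc : fderiv ℝ u y = c • L) :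
    2 * L (bochnerFlux e u y) = c * ∑ j, ∑ k, fderiv ℝ (fderiv ℝ u) y
      (L (e j) • e k - L (e k) • e j) (L (e j) • e k - L (e k) • e j) := by
  set B := fderiv ℝ (fderiv ℝ u) y
  set G : κ → κ → ℝ := fun j k =>
    c * (L (e j) * (B (e k) (e k) * L (e j) - B (e j) (e k) * L (e k)))
  have hflux : L (bochnerFlux e u y) = ∑ j, ∑ k, G j k := by
    simp only [bochnerFlux, G, hc, map_sum, map_smul, map_sub, _root_.smul_apply, smul_eq_mul,
      mul_assoc, B]
  calc 2 * L (bochnerFlux e u y) = ∑ j, ∑ k, G j k + ∑ j, ∑ k, G k j := by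
        rw [hflux, Finset.sum_comm (f := fun j k => G k j), two_mul]
    _ = _ := by
        simp only [Finset.mul_sum, ← Finset.sum_add_distrib, G, map_sub, map_smul,
          _root_.sub_apply, _root_.smul_apply, smul_eq_mul]
        refine Finset.sum_congr rfl fun j _ => Finset.sum_congr rfl fun k _ => ?_
        ring

lemma IsOuterNormal.apply_bochnerFlux_nonneg_of_pos {x₀ : E} (hL : IsOuterNormal Ω y L)
    (hΩo : IsOpen Ω) (hΩc : Convex ℝ Ω) (hu : ContDiff ℝ 2 u) (hbd : ∀ x ∈ frontier Ω, u x = 0)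
    (hx₀ : x₀ ∈ Ω) (hpos : 0 < fderiv ℝ u y (x₀ - y)) : 0 ≤ L (bochnerFlux e u y) := by
  obtain ⟨c, hc, hDuL⟩ :=
    hL.exists_fderiv_eq_neg_smul hΩo hΩc (hu.of_le (by norm_num)) hbd hx₀ hpos
  refine nonneg_of_mul_nonneg_right ?_ two_pos
  rw [two_mul_apply_bochnerFlux hDuL]
  refine mul_nonneg_of_nonpos_of_nonpos hc.le <| Finset.sum_nonpos fun j _ =>
    Finset.sum_nonpos fun k _ => hL.fderiv_fderiv_apply_nonpos hΩo hΩc hu hbd hx₀ hpos ?_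
  rw [map_sub, map_smul, map_smul, smul_eq_mul, smul_eq_mul, mul_comm, sub_self]

lemma exists_mem_apply_sub_ne_zero (hΩo : IsOpen Ω) (hΩ : Ω.Nonempty) (hL : L ≠ 0) (y : E) :
    ∃ x ∈ Ω, L (x - y) ≠ 0 := by
  by_contra! hzero
  obtain ⟨a, ha⟩ := hΩ
  have hconst : L =ᶠ[𝓝 a] fun _ => L y := by
    filter_upwards [hΩo.mem_nhds ha] with x hx
    rw [← sub_eq_zero, ← map_sub, hzero x hx]
  have hfd := hconst.fderiv_eq (𝕜 := ℝ)
  rw [L.fderiv, fderiv_fun_const] at hfd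
  exact hL hfd

lemma IsOuterNormal.apply_bochnerFlux_nonneg (hL : IsOuterNormal Ω y L) (hΩo : IsOpen Ω)
    (hΩc : Convex ℝ Ω) (hu : ContDiff ℝ 2 u) (hbd : ∀ x ∈ frontier Ω, u x = 0) :
    0 ≤ L (bochnerFlux e u y) := by
  by_cases hDu : fderiv ℝ u y = 0
  · simp only [bochnerFlux, hDu, _root_.zero_apply, zero_smul, Finset.sum_const_zero, map_zero,
      le_refl]
  have hΩ : Ω.Nonempty := closure_nonempty_iff.1 ⟨y, hL.mem_frontier.1⟩
  obtain ⟨x₀, hx₀, hne⟩ := exists_mem_apply_sub_ne_zero hΩo hΩ hDu y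
  rcases hne.lt_or_gt with hneg | hpos
  · rw [← bochnerFlux_neg]
    refine hL.apply_bochnerFlux_nonneg_of_pos hΩo hΩc hu.neg (fun x hx => ?_) hx₀ ?_
    · rw [Pi.neg_apply, hbd x hx, neg_zero]
    · rwa [fderiv_neg, _root_.neg_apply, neg_pos]
  · exact hL.apply_bochnerFlux_nonneg_of_pos hΩo hΩc hu hbd hx₀ hpos

end Flux

section Divergence

variable [MeasurableSpace E] [BorelSpace E] [FiniteDimensional ℝ E] {ν : Measure E}
  [ν.IsAddHaarMeasure] {Ω : Set E} {w : E → ℝ}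

lemma hasWeakDiv_bochnerFlux (e : κ → E) (hu : ContDiff ℝ 2 u) :
    HasWeakDiv ν (bochnerFlux e u) (bochnerDiv e u) := by
  have hDu := contDiff_fderiv_apply hu
  convert HasWeakDiv.sum (ν := ν) Finset.univ fun j _ => HasWeakDiv.sum Finset.univ fun k _ =>
    (HasWeakDiv.of_fderiv_swap (hDu (e k)) (e j) (e k)).smul (hDu (e j)) using 1
  · simp only [fderiv_fderiv_apply hu]
    rfl
  · have hsymm : ∀ x, IsSymmSndFDerivAt ℝ u x := fun x =>
      hu.contDiffAt.isSymmSndFDerivAt (by simp)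
    ext x
    simp only [bochnerDiv, sq, Finset.sum_mul_sum, ← Finset.sum_sub_distrib,
      fderiv_fderiv_apply hu, Pi.zero_apply, mul_zero, zero_add, map_sub, map_smul,
      _root_.sub_apply, _root_.smul_apply, smul_eq_mul]
    refine Finset.sum_congr rfl fun j _ => Finset.sum_congr rfl fun k _ => ?_
    rw [(hsymm x).eq (e k) (e j)]
    ring

theorem setIntegral_weighted_bochner_nonneg (e : κ → E) (hΩo : IsOpen Ω)
    (hΩb : Bornology.IsBounded Ω) (hΩc : Convex ℝ Ω) (hu : ContDiff ℝ 2 u)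
    (hbd : ∀ x ∈ frontier Ω, u x = 0) (hw : ContDiff ℝ 1 w) (hw₀ : ∀ x, 0 ≤ w x) :
    0 ≤ ∫ x in Ω, (w x * bochnerDiv e u x + fderiv ℝ w x (bochnerFlux e u x)) ∂ν := by
  refine ((hasWeakDiv_bochnerFlux e hu).smul hw).setIntegral_nonneg hΩo hΩb hΩc fun y L hL => ?_
  rw [map_smul]
  exact mul_nonneg (hw₀ y) (hL.apply_bochnerFlux_nonneg hΩo hΩc hu hbd)

end Divergence

end Bochner

section CauchySchwarz

variable {ι κ : Type*} [Fintype ι] [Fintype κ]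

lemma sum_sq_sum_mul_le (a : ι → ℝ) (M : ι → κ → ℝ) :
    ∑ k, (∑ i, a i * M i k) ^ 2 ≤ (∑ i, a i ^ 2) * ∑ i, ∑ k, M i k ^ 2 := by
  rw [Finset.sum_comm, Finset.mul_sum]
  exact Finset.sum_le_sum fun k _ => Finset.sum_mul_sq_le_sq_mul_sq _ _ _

lemma neg_two_mul_sum_mul_le (g h : κ → ℝ) {q : ℝ} (hq : 0 < q) :
    -(2 * ∑ k, g k * h k) ≤ q * ∑ k, g k ^ 2 + q⁻¹ * ∑ k, h k ^ 2 := by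
  rw [Finset.mul_sum, Finset.mul_sum, Finset.mul_sum, ← Finset.sum_neg_distrib,
    ← Finset.sum_add_distrib]
  refine Finset.sum_le_sum fun k _ => ?_
  have hsq : q * g k ^ 2 + q⁻¹ * h k ^ 2 + 2 * (g k * h k) = q⁻¹ * (q * g k + h k) ^ 2 := by
    field_simp
    ring
  linarith [show 0 ≤ q⁻¹ * (q * g k + h k) ^ 2 by positivity]

-- Young's inequality with parameter `2 * p - 3` is what produces the constant `(2 * p - 3)⁻²`.
lemma weighted_sub_le_of_sum_sq_le {g h : κ → ℝ} {c w p N X Y : ℝ} (hg : ∑ k, g k ^ 2 ≤ N * X)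
    (hh : ∑ k, h k ^ 2 ≤ N * Y) (hX : 0 ≤ X) (hY : 0 ≤ Y) (hc : 0 ≤ c) (hcw : c * N ≤ w)
    (hp1 : 3 / 2 < p) (hp2 : p ≤ 2) :
    w * (Y - X) + 2 * (p - 2) * c * (∑ k, g k * h k - ∑ k, g k ^ 2)
      ≤ (p - 1) * (2 * p - 3) * ((1 / (2 * p - 3)) ^ 2 * (w * Y) - w * X) := by
  obtain ⟨q, hq⟩ : ∃ q, q = 2 * p - 3 := ⟨_, rfl⟩
  have hq₀ : 0 < q := by linarith
  have hp₀ : 0 ≤ 2 - p := by linarith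
  have hyoung := neg_two_mul_sum_mul_le g h hq₀
  have hgX : c * ∑ k, g k ^ 2 ≤ w * X := calc
    _ ≤ c * N * X := by rw [mul_assoc]; gcongr
    _ ≤ w * X := by gcongr
  have hhY : c * ∑ k, h k ^ 2 ≤ w * Y := calc
    _ ≤ c * N * Y := by rw [mul_assoc]; gcongr
    _ ≤ w * Y := by gcongr
  rw [← hq]
  calc w * (Y - X) + 2 * (p - 2) * c * (∑ k, g k * h k - ∑ k, g k ^ 2)
      = w * (Y - X) + (2 - p) * (c * -(2 * ∑ k, g k * h k) + 2 * (c * ∑ k, g k ^ 2)) := by ring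
    _ ≤ w * (Y - X) + (2 - p) * (c * (q * ∑ k, g k ^ 2 + q⁻¹ * ∑ k, h k ^ 2)
          + 2 * (c * ∑ k, g k ^ 2)) := by gcongr
    _ = w * (Y - X) + (2 - p) * ((q + 2) * (c * ∑ k, g k ^ 2) + q⁻¹ * (c * ∑ k, h k ^ 2)) := by
        ring
    _ ≤ w * (Y - X) + (2 - p) * ((q + 2) * (w * X) + q⁻¹ * (w * Y)) := by gcongr
    _ = (p - 1) * q * ((1 / q) ^ 2 * (w * Y) - w * X) := by
        obtain rfl : p = (q + 3) / 2 := by linarith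
        field_simp
        ring

end CauchySchwarz

section VectorField

variable {E ι κ : Type*} [NormedAddCommGroup E] [NormedSpace ℝ E] [Fintype ι] [Fintype κ]
  {e : κ → E} {v : ι → E → ℝ}

/-- The squared norm `|∇v|²` of the gradient of a vector field with components `v i`, formed from
the derivatives along the vectors `e j`. -/
noncomputable def gradSq (e : κ → E) (v : ι → E → ℝ) (x : E) : ℝ :=
  ∑ i, ∑ j, fderiv ℝ (v i) x (e j) ^ 2

/-- The squared norm `|∇∇v|²` of the Hessian of a vector field with components `v i`, formed from
the derivatives along the vectors `e j`. -/
noncomputable def hessSq (e : κ → E) (v : ι → E → ℝ) (x : E) : ℝ :=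
  ∑ i, ∑ j, ∑ k, fderiv ℝ (fderiv ℝ (v i)) x (e j) (e k) ^ 2

/-- The squared norm `|Δv|²` of the Laplacian of a vector field with components `v i`, formed from
the derivatives along the vectors `e j`. -/
noncomputable def laplSq (e : κ → E) (v : ι → E → ℝ) (x : E) : ℝ :=
  ∑ i, (∑ j, fderiv ℝ (fderiv ℝ (v i)) x (e j) (e j)) ^ 2

/-- The vector `∇v : ∇∇v` with components `∑ᵢⱼ ∂ⱼvᵢ ∂ⱼ∂ₖvᵢ`, which is half the gradient of
`gradSq e v`. -/
noncomputable def gradHess (e : κ → E) (v : ι → E → ℝ) (x : E) (k : κ) : ℝ :=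
  ∑ i, ∑ j, fderiv ℝ (v i) x (e j) * fderiv ℝ (fderiv ℝ (v i)) x (e j) (e k)

/-- The vector `(∇v)ᵀ Δv` with components `∑ᵢ Δvᵢ ∂ⱼvᵢ`. -/
noncomputable def gradLapl (e : κ → E) (v : ι → E → ℝ) (x : E) (j : κ) : ℝ :=
  ∑ i, (∑ k, fderiv ℝ (fderiv ℝ (v i)) x (e k) (e k)) * fderiv ℝ (v i) x (e j)

lemma sum_sq_gradHess_le (x : E) : ∑ k, gradHess e v x k ^ 2 ≤ gradSq e v x * hessSq e v x := by
  simpa only [gradHess, gradSq, hessSq, Fintype.sum_prod_type] using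
    sum_sq_sum_mul_le (fun z : ι × κ => fderiv ℝ (v z.1) x (e z.2))
      fun z k => fderiv ℝ (fderiv ℝ (v z.1)) x (e z.2) (e k)

lemma sum_sq_gradLapl_le (x : E) : ∑ j, gradLapl e v x j ^ 2 ≤ gradSq e v x * laplSq e v x := by
  rw [mul_comm]
  exact sum_sq_sum_mul_le _ _

lemma sum_bochnerDiv (x : E) : ∑ i, bochnerDiv e (v i) x = laplSq e v x - hessSq e v x := by
  simp only [bochnerDiv, laplSq, hessSq, Finset.sum_sub_distrib]

lemma gradSq_nonneg (x : E) : 0 ≤ gradSq e v x := by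
  unfold gradSq
  positivity

lemma hessSq_nonneg (x : E) : 0 ≤ hessSq e v x := by
  unfold hessSq
  positivity

lemma laplSq_nonneg (x : E) : 0 ≤ laplSq e v x := by
  unfold laplSq
  positivity

lemma contDiff_gradSq (hv : ∀ i, ContDiff ℝ 2 (v i)) : ContDiff ℝ 1 (gradSq e v) :=
  ContDiff.sum fun i _ => ContDiff.sum fun j _ => (contDiff_fderiv_apply (hv i) (e j)).pow 2

lemma continuous_hessSq (hv : ∀ i, ContDiff ℝ 2 (v i)) : Continuous (hessSq e v) :=
  continuous_finsetSum _ fun i _ => continuous_finsetSum _ fun j _ => continuous_finsetSum _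
    fun k _ => (continuous_fderiv_fderiv_apply (hv i) (e j) (e k)).pow 2

lemma continuous_laplSq (hv : ∀ i, ContDiff ℝ 2 (v i)) : Continuous (laplSq e v) :=
  continuous_finsetSum _ fun i _ => (continuous_finsetSum _ fun j _ =>
    continuous_fderiv_fderiv_apply (hv i) (e j) (e j)).pow 2

lemma fderiv_gradSq_apply (hv : ∀ i, ContDiff ℝ 2 (v i)) (x : E) (k : κ) :
    fderiv ℝ (gradSq e v) x (e k) = 2 * gradHess e v x k := by
  have hd : ∀ i j, HasFDerivAt (fun x => fderiv ℝ (v i) x (e j) ^ 2) _ x := fun i j =>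
    ((contDiff_fderiv_apply (hv i) (e j)).differentiable one_ne_zero x).hasFDerivAt.pow 2
  have hsum : HasFDerivAt (gradSq e v) _ x :=
    HasFDerivAt.fun_sum fun i _ => HasFDerivAt.fun_sum fun j _ => hd i j
  rw [hsum.fderiv]
  simp only [_root_.sum_apply, _root_.smul_apply, fderiv_fderiv_apply (hv _), gradHess,
    Finset.mul_sum]
  refine Finset.sum_congr rfl fun i _ => Finset.sum_congr rfl fun j _ => ?_
  rw [((hv i).contDiffAt.isSymmSndFDerivAt (by simp)).eq (e k) (e j)]
  simp only [Nat.add_one_sub_one, pow_one, nsmul_eq_mul, Nat.cast_ofNat, smul_eq_mul, mul_assoc]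

lemma sum_fderiv_gradSq_bochnerFlux (hv : ∀ i, ContDiff ℝ 2 (v i)) (x : E) :
    ∑ i, fderiv ℝ (gradSq e v) x (bochnerFlux e (v i) x)
      = 2 * (∑ k, gradHess e v x k * gradLapl e v x k - ∑ k, gradHess e v x k ^ 2) := by
  have hlapl : ∀ g : κ → ℝ, ∑ i, ∑ j, ∑ k, fderiv ℝ (v i) x (e j) *
      (fderiv ℝ (fderiv ℝ (v i)) x (e k) (e k) * g j) = ∑ j, g j * gradLapl e v x j := fun g => by
    rw [Finset.sum_comm]
    simp only [gradLapl, Finset.mul_sum, mul_comm, mul_left_comm]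
  have hhess : ∀ g : κ → ℝ, ∑ i, ∑ j, ∑ k, fderiv ℝ (v i) x (e j) *
      (fderiv ℝ (fderiv ℝ (v i)) x (e j) (e k) * g k) = ∑ k, g k * gradHess e v x k := fun g => by
    rw [Finset.sum_congr rfl fun i _ => Finset.sum_comm, Finset.sum_comm]
    simp only [gradHess, Finset.mul_sum, mul_comm, mul_left_comm]
  simp only [bochnerFlux, map_sum, map_smul, map_sub, smul_eq_mul, fderiv_gradSq_apply hv,
    mul_sub, Finset.sum_sub_distrib, hlapl, hhess]
  simp only [mul_assoc, Finset.mul_sum, sq]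

lemma fderiv_rpow_const_add_gradSq (hv : ∀ i, ContDiff ℝ 2 (v i)) {μ : ℝ} (hμ : 0 < μ) (r : ℝ)
    (x : E) : fderiv ℝ (fun x => (μ + gradSq e v x) ^ r) x
      = (r * (μ + gradSq e v x) ^ (r - 1)) • fderiv ℝ (gradSq e v) x := by
  have hd := ((contDiff_gradSq (e := e) hv).differentiable one_ne_zero x).hasFDerivAt.const_add μ
  exact (hd.rpow_const (.inl (by linarith [gradSq_nonneg (e := e) (v := v) x]))).fderiv

lemma sum_weighted_bochner_le (hv : ∀ i, ContDiff ℝ 2 (v i)) {μ p : ℝ} (hμ : 0 < μ)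
    (hp1 : 3 / 2 < p) (hp2 : p ≤ 2) (x : E) :
    ∑ i, ((μ + gradSq e v x) ^ (p - 2) * bochnerDiv e (v i) x
        + fderiv ℝ (fun x => (μ + gradSq e v x) ^ (p - 2)) x (bochnerFlux e (v i) x))
      ≤ (p - 1) * (2 * p - 3) * ((1 / (2 * p - 3)) ^ 2 * ((μ + gradSq e v x) ^ (p - 2)
        * laplSq e v x) - (μ + gradSq e v x) ^ (p - 2) * hessSq e v x) := by
  have hpos : 0 < μ + gradSq e v x := by linarith [gradSq_nonneg (e := e) (v := v) x]
  have hweight : (μ + gradSq e v x) ^ (p - 2 - 1) * gradSq e v x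
      ≤ (μ + gradSq e v x) ^ (p - 2) := calc
    _ ≤ (μ + gradSq e v x) ^ (p - 2 - 1) * (μ + gradSq e v x) := by
      gcongr
      linarith
    _ = _ := by rw [← Real.rpow_add_one hpos.ne', sub_add_cancel]
  refine le_of_eq_of_le ?_ (weighted_sub_le_of_sum_sq_le (sum_sq_gradHess_le x)
    (sum_sq_gradLapl_le x) (hessSq_nonneg x) (laplSq_nonneg x) (by positivity) hweight hp1 hp2)
  simp only [fderiv_rpow_const_add_gradSq hv hμ, _root_.smul_apply, smul_eq_mul,
    Finset.sum_add_distrib, ← Finset.mul_sum, sum_bochnerDiv, sum_fderiv_gradSq_bochnerFlux hv]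
  ring

theorem stmt8_general [FiniteDimensional ℝ E] [MeasurableSpace E] [BorelSpace E] (ν : Measure E)
    [ν.IsAddHaarMeasure] (e : κ → E) {Ω : Set E} (hΩo : IsOpen Ω) (hΩb : Bornology.IsBounded Ω)
    (hΩc : Convex ℝ Ω) {μ p : ℝ} (hμ : 0 < μ) (hp1 : 3 / 2 < p) (hp2 : p ≤ 2)
    (hv : ∀ i, ContDiff ℝ 2 (v i)) (hbd : ∀ i, ∀ x ∈ frontier Ω, v i x = 0) :
    ∫ x in Ω, (μ + gradSq e v x) ^ (p - 2) * hessSq e v x ∂ν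
      ≤ (1 / (2 * p - 3)) ^ 2 * ∫ x in Ω, (μ + gradSq e v x) ^ (p - 2) * laplSq e v x ∂ν := by
  have hpos : ∀ x, 0 < μ + gradSq e v x := fun x => add_pos_of_pos_of_nonneg hμ (gradSq_nonneg x)
  have hw : ContDiff ℝ 1 fun x => (μ + gradSq e v x) ^ (p - 2) :=
    (contDiff_const.add (contDiff_gradSq hv)).rpow_const_of_ne fun x => (hpos x).ne'
  have hint : ∀ {f : E → ℝ}, Continuous f → IntegrableOn f Ω ν := fun hf =>
    (hf.continuousOn.integrableOn_compact hΩb.isCompact_closure).mono_set subset_closure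
  have hX : IntegrableOn (fun x => (μ + gradSq e v x) ^ (p - 2) * hessSq e v x) Ω ν :=
    hint (hw.continuous.mul (continuous_hessSq hv))
  have hY : IntegrableOn (fun x => (μ + gradSq e v x) ^ (p - 2) * laplSq e v x) Ω ν :=
    hint (hw.continuous.mul (continuous_laplSq hv))
  have hT := fun i => hint ((hasWeakDiv_bochnerFlux (ν := ν) e (hv i)).smul hw).continuous_div
  have hnonneg : 0 ≤ (p - 1) * (2 * p - 3) * ∫ x in Ω, ((1 / (2 * p - 3)) ^ 2 *
      ((μ + gradSq e v x) ^ (p - 2) * laplSq e v x)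
        - (μ + gradSq e v x) ^ (p - 2) * hessSq e v x) ∂ν := calc
    0 ≤ ∑ i, ∫ x in Ω, ((μ + gradSq e v x) ^ (p - 2) * bochnerDiv e (v i) x
        + fderiv ℝ (fun x => (μ + gradSq e v x) ^ (p - 2)) x (bochnerFlux e (v i) x)) ∂ν :=
      Finset.sum_nonneg fun i _ => setIntegral_weighted_bochner_nonneg e hΩo hΩb hΩc (hv i)
        (hbd i) hw fun x => Real.rpow_nonneg (hpos x).le _
    _ ≤ _ := by
      rw [← integral_finsetSum _ fun i _ => hT i, ← integral_const_mul]
      exact integral_mono (integrable_finsetSum _ fun i _ => hT i)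
        (((hY.const_mul _).sub hX).const_mul _) (sum_weighted_bochner_le hv hμ hp1 hp2)
  rw [integral_sub (hY.const_mul _) hX, integral_const_mul] at hnonneg
  exact sub_nonneg.1 (nonneg_of_mul_nonneg_right hnonneg
    (mul_pos (by linarith) (by linarith)))

end VectorField

section Components

variable {n : ℕ} {v : (Fin n → ℝ) → Fin n → ℝ}

lemma Dmat_apply (hv : Differentiable ℝ v) (x : Fin n → ℝ) (i j : Fin n) :
    Dmat v x i j = fderiv ℝ (fun y => v y i) x (Pi.single j 1) := by
  rw [fderiv_apply (hv x)]
  rfl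

lemma D3_apply (hv : ContDiff ℝ 2 v) (x : Fin n → ℝ) (i j k : Fin n) :
    D3 v x i j k
      = fderiv ℝ (fderiv ℝ fun y => v y i) x (Pi.single j 1) (Pi.single k 1) := by
  have hvi : ContDiff ℝ 2 fun y => v y i := contDiff_pi.1 hv i
  simp only [D3, Dmat_apply (hv.differentiable two_ne_zero)]
  rw [fderiv_fderiv_apply hvi, (hvi.contDiffAt.isSymmSndFDerivAt (by simp)).eq]

end Components

/-- Weighted second-derivative estimate on a bounded convex (C²) domain: for `μ > 0`,
`p ∈ (3/2, 2]` and `v ∈ W^{2,2}(Ω) ∩ W₀^{1,2}(Ω)` (here: `C²` and vanishing on `∂Ω`),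
`∫_Ω (μ+|∇v|²)^{p−2}|∇∇v|² ≤ (1/(2p−3))² ∫_Ω (μ+|∇v|²)^{p−2}|Δv|²`. -/
theorem stmt8 (n : ℕ) (hn : 3 ≤ n) (Ω : Set (Fin n → ℝ)) (hΩo : IsOpen Ω)
    (hΩb : Bornology.IsBounded Ω) (hΩc : Convex ℝ Ω)
    (μ p : ℝ) (hμ : 0 < μ) (hp1 : 3 / 2 < p) (hp2 : p ≤ 2)
    (v : (Fin n → ℝ) → Fin n → ℝ) (hv : ContDiff ℝ 2 v)
    (hbd : ∀ x ∈ frontier Ω, v x = 0) :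
    ∫ x in Ω, (μ + frobSq (Dmat v x)) ^ (p - 2) * (∑ i, ∑ j, ∑ k, (D3 v x i j k) ^ 2)
      ≤ (1 / (2 * p - 3)) ^ 2 *
        ∫ x in Ω, (μ + frobSq (Dmat v x)) ^ (p - 2) * (∑ i, (∑ j, D3 v x i j j) ^ 2) := by
  have hdiff := hv.differentiable two_ne_zero
  simpa only [frobSq, Dmat_apply hdiff, D3_apply hv, gradSq, hessSq, laplSq] using
    stmt8_general volume (fun k : Fin n => Pi.single k 1) hΩo hΩb hΩc hμ hp1 hp2
      (contDiff_pi.1 hv) fun i x hx => congrFun (hbd x hx) i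
end
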